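/- Let d ≥ 3 and ε ∈ (0,1), fix 1 ≤ r_N ≤ N^{1−ε}, and let A = B(0,r_N) and B = B(0,N^{1−ε/2}) in T. For any nonempty V ⊆ A define f_V(x) = 1 − E_x[H_V]/E[H_V]. There exist constants c, c′ > 0 depending only on d and ε such that for all N ≥ 2: inf_{x∈T} f_V(x) ≥ −c N^{−c′} and sup_{x ∈ T∖B} |f_V(x)| ≤ c N^{−c′}. -/

import Mathlib

open MeasureTheory Filter Classical
open scoped ENNReal NNReal

noncomputable section

namespace Frag

/-! ### Graph-theoretic basics -/

/-- Two vertices of `Fin d → R` are adjacent if they differ in exactly one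
coordinate, by `±1` (Euclidean distance one). -/
def adj {d : ℕ} {R : Type*} [AddGroupWithOne R] (x y : Fin d → R) : Prop :=
  x ≠ y ∧ ∃ i : Fin d, (y i = x i + 1 ∨ x i = y i + 1) ∧ ∀ j : Fin d, j ≠ i → x j = y j

/-- The discrete torus `(ℤ/Nℤ)^d`. -/
abbrev Torus (d N : ℕ) := Fin d → ZMod N

/-- The lattice `ℤ^d`. -/
abbrev Lat (d : ℕ) := Fin d → ℤ

instance (n : ℕ) : MeasurableSpace (ZMod n) := ⊤

/-- The `ℓ∞`-distance on the torus. -/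
def torusDist {d N : ℕ} (x y : Torus d N) : ℕ :=
  Finset.univ.sup fun i : Fin d => min (x i - y i).val (y i - x i).val

/-- The `ℓ∞`-distance on the lattice. -/
def latDist {d : ℕ} (x y : Lat d) : ℕ :=
  Finset.univ.sup fun i : Fin d => (x i - y i).natAbs

/-- Closed `ℓ∞`-ball in the torus. -/
def torusBall {d N : ℕ} (x : Torus d N) (r : ℝ) : Set (Torus d N) :=
  {y | (torusDist x y : ℝ) ≤ r}

/-- Closed `ℓ∞`-ball in the lattice. -/
def latBall {d : ℕ} (x : Lat d) (r : ℝ) : Set (Lat d) :=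
  {y | (latDist x y : ℝ) ≤ r}

/-- `x` and `y` are connected by a nearest-neighbour path staying in `S`. -/
def connectedIn {α : Type*} (rel : α → α → Prop) (S : Set α) (x y : α) : Prop :=
  ∃ (n : ℕ) (p : ℕ → α), p 0 = x ∧ p n = y ∧ (∀ k, k ≤ n → p k ∈ S) ∧
    ∀ k, k < n → rel (p k) (p (k + 1))

/-- The connected component of `x` inside `S`. -/
def compOf {α : Type*} (rel : α → α → Prop) (S : Set α) (x : α) : Set α :=
  {y | connectedIn rel S x y}

/-- `S` is a connected set. -/
def IsConnSet {α : Type*} (rel : α → α → Prop) (S : Set α) : Prop :=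
  ∀ x ∈ S, ∀ y ∈ S, connectedIn rel S x y

/-- External vertex boundary. -/
def extBdry {α : Type*} (rel : α → α → Prop) (S : Set α) : Set α :=
  {y | y ∉ S ∧ ∃ x ∈ S, rel x y}

/-- Internal vertex boundary. -/
def intBdry {α : Type*} (rel : α → α → Prop) (S : Set α) : Set α :=
  {x | x ∈ S ∧ ∃ y, y ∉ S ∧ rel x y}

/-- The cardinality of the largest connected component of `S`. -/
def maxCompSize {α : Type*} (rel : α → α → Prop) (S : Set α) : ℕ :=
  sSup {n | ∃ x ∈ S, n = (compOf rel S x).ncard}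

/-- The diameter of a set with respect to a distance. -/
def diamOf {α : Type*} (dist : α → α → ℕ) (S : Set α) : ℕ :=
  sSup {n | ∃ x ∈ S, ∃ y ∈ S, n = dist x y}

/-- The canonical graph isomorphism `φ` from `B(0, N/4) ⊆ (ℤ/Nℤ)^d` onto
`B(0, N/4) ⊆ ℤ^d`, given by the signed representative of each coordinate. -/
def torusToLat {d N : ℕ} (x : Torus d N) : Lat d :=
  fun i => if ((x i).val : ℝ) ≤ (N : ℝ) / 2 then ((x i).val : ℤ) else ((x i).val : ℤ) - (N : ℤ)

/-! ### Discrete-time simple random walk -/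

/-- One-step transition probability of the simple random walk. -/
def srwStep {d : ℕ} {R : Type*} [AddGroupWithOne R] (x y : Fin d → R) : ℝ≥0∞ :=
  if adj x y then ((2 * d : ℕ) : ℝ≥0∞)⁻¹ else 0

/-- `μ` is the law on path space of the discrete-time simple random walk with
initial distribution `init`, characterized by its cylinder probabilities. -/
def IsWalkLaw {d : ℕ} {R : Type*} [AddGroupWithOne R] [MeasurableSpace R]
    (μ : Measure (ℕ → (Fin d → R))) (init : (Fin d → R) → ℝ≥0∞) : Prop :=
  IsProbabilityMeasure μ ∧
  ∀ (n : ℕ) (w : ℕ → (Fin d → R)),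
    μ {ω | ∀ k, k ≤ n → ω k = w k} =
      init (w 0) * ∏ k ∈ Finset.range n, srwStep (w k) (w (k + 1))

/-- The uniform initial distribution on the torus. -/
def unifInit (d N : ℕ) : Torus d N → ℝ≥0∞ := fun _ => ((N : ℝ≥0∞) ^ d)⁻¹

/-- The initial distribution concentrated at `x`. -/
def pointInit {α : Type*} (x : α) : α → ℝ≥0∞ := fun y => if y = x then 1 else 0

/-- The set of sites visited in the first `t` steps. -/
def visited {α : Type*} (t : ℕ) (ω : ℕ → α) : Set α := {v | ∃ k, k ≤ t ∧ ω k = v}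

/-! ### Capacity and random interlacements on `ℤ^d` -/

/-- The event that the walk never returns to `V` after time `0`. -/
def escEvent {d : ℕ} (V : Set (Lat d)) : Set (ℕ → Lat d) :=
  {w | ∀ n, 1 ≤ n → w n ∉ V}

/-- `r` is the (simple random walk) capacity of `V ⊆ ℤ^d`:
`r = Σ_{x ∈ V} P_x[H̃_V = ∞]`. -/
def IsCap (d : ℕ) (V : Set (Lat d)) (r : ℝ) : Prop :=
  ∃ μ : Lat d → Measure (ℕ → Lat d),
    (∀ x, IsWalkLaw (μ x) (pointInit x)) ∧
    r = ∑ᶠ x ∈ V, ((μ x) (escEvent V)).toReal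

/-- `I` is a random interlacement at level `u` on the probability space `(Ω, P)`:
for every finite `V ⊆ ℤ^d`, `P[I ∩ V = ∅] = exp (−u · cap V)`. -/
def IsInterlacement (d : ℕ) (u : ℝ) {Ω : Type*} [MeasurableSpace Ω]
    (P : Measure Ω) (I : Ω → Set (Lat d)) : Prop :=
  IsProbabilityMeasure P ∧
  (∀ x : Lat d, MeasurableSet {ω | x ∈ I ω}) ∧
  ∀ V : Set (Lat d), V.Finite → ∀ r : ℝ, IsCap d V r →
    P {ω | ∀ x ∈ V, x ∉ I ω} = ENNReal.ofReal (Real.exp (-u * r))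

/-- `e = η(u)`, the probability that the origin lies in an infinite component of
the vacant set `V^u = ℤ^d ∖ I^u` of a random interlacement at level `u`. -/
def IsEta (d : ℕ) (u e : ℝ) : Prop :=
  ∃ (Ω : Type) (_ : MeasurableSpace Ω) (P : Measure Ω) (I : Ω → Set (Lat d)),
    IsInterlacement d u P I ∧
    e = (P {ω | (compOf adj ((I ω)ᶜ) (0 : Lat d)).Infinite}).toReal

/-- The critical level `u_* = inf {u ≥ 0 : η(u) = 0}`. -/
def uStar (d : ℕ) : ℝ := sInf {u | 0 ≤ u ∧ IsEta d u 0}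

/-- The probability of an event `E` about a random interlacement at level `u`. -/
def intProb (d : ℕ) (u : ℝ) (E : Set (Lat d) → Prop) : ℝ :=
  sSup {p | ∃ (Ω : Type) (_ : MeasurableSpace Ω) (P : Measure Ω) (I : Ω → Set (Lat d)),
    IsInterlacement d u P I ∧ p = (P {ω | E (I ω)}).toReal}

/-- The event that `B(0,L)` is connected to the external boundary of `B(0,2L)`
by a nearest-neighbour path in `S`. -/
def connAcross (d L : ℕ) (S : Set (Lat d)) : Prop :=
  ∃ x ∈ latBall (0 : Lat d) (L : ℝ), ∃ y ∈ extBdry adj (latBall (0 : Lat d) (2 * (L : ℝ))),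
    connectedIn adj S x y

/-- The critical level `u_** = inf {u ≥ 0 : α(u) > 0}`. -/
def uStarStar (d : ℕ) : ℝ :=
  sInf {u | 0 ≤ u ∧ ∃ a : ℝ, 0 < a ∧
    Tendsto (fun L : ℕ => (L : ℝ) ^ a * intProb d u fun I => connAcross d L Iᶜ)
      atTop (nhds 0)}

/-- `u` is a strongly supercritical level for random interlacements on `ℤ^d`. -/
def StronglySupercritical (d : ℕ) (u : ℝ) : Prop :=
  ∃ μ : ℝ, 0 < μ ∧
  ∃ (Ω : Type) (_ : MeasurableSpace Ω) (P : Measure Ω) (I : ℝ → Ω → Set (Lat d)),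
    (∀ v : ℝ, 0 ≤ v → IsInterlacement d v P (I v)) ∧
    (∀ v v' : ℝ, v ≤ v' → ∀ ω, I v ω ⊆ I v' ω) ∧
    ∃ N₀ : ℕ, ∀ N : ℕ, N₀ ≤ N →
      (1 - Real.exp (-(N : ℝ) ^ μ) ≤
        (P {ω | ∃ x ∈ latBall (0 : Lat d) (N : ℝ),
          (compOf adj ((I (u * (1 + μ)) ω)ᶜ) x).Infinite}).toReal) ∧
      (1 - Real.exp (-(N : ℝ) ^ μ) ≤
        (P {ω | ∀ S₁ S₂ : Set (Lat d),
            S₁ ⊆ (I (u * (1 - μ)) ω)ᶜ ∩ latBall 0 (N : ℝ) →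
            S₂ ⊆ (I (u * (1 - μ)) ω)ᶜ ∩ latBall 0 (N : ℝ) →
            IsConnSet adj S₁ → IsConnSet adj S₂ →
            (N : ℝ) / 8 ≤ (diamOf latDist S₁ : ℝ) →
            (N : ℝ) / 8 ≤ (diamOf latDist S₂ : ℝ) →
            ∃ x ∈ S₁, ∃ y ∈ S₂,
              connectedIn adj ((I (u * (1 + μ)) ω)ᶜ ∩ latBall 0 (2 * (N : ℝ))) x y}).toReal)

/-! ### Continuous-time walk -/

/-- Sample space for the continuous-time walk: a discrete path together with
the i.i.d. exponential interarrival gaps of the driving Poisson process. -/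
abbrev CTPath (d N : ℕ) := (ℕ → Torus d N) × (ℕ → ℝ)

/-- The number of jumps performed up to time `t`. -/
def nJumps (g : ℕ → ℝ) (t : ℝ) : ℕ := sSup {n | ∑ k ∈ Finset.range n, g k ≤ t}

/-- The position of the continuous-time walk at time `t`. -/
def ctPos {d N : ℕ} (ω : CTPath d N) (t : ℝ) : Torus d N := ω.1 (nJumps ω.2 t)

/-- `ν` is the law of an i.i.d. sequence of exponential random variables of
parameter `1`, characterized by its joint survival function. -/
def IsIIDExp (ν : Measure (ℕ → ℝ)) : Prop :=
  IsProbabilityMeasure ν ∧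
  ∀ (n : ℕ) (s : ℕ → ℝ), (∀ k, 0 ≤ s k) →
    ν {g | ∀ k, k ≤ n → s k < g k} =
      ENNReal.ofReal (Real.exp (-(∑ k ∈ Finset.range (n + 1), s k)))

/-- `P` is the law of the continuous-time simple random walk `Y_t = X_{N_t}`
with initial distribution `init`. -/
def IsCTWalk {d N : ℕ} (P : Measure (CTPath d N)) (init : Torus d N → ℝ≥0∞) : Prop :=
  ∃ (μ : Measure (ℕ → Torus d N)) (ν : Measure (ℕ → ℝ)),
    IsWalkLaw μ init ∧ IsIIDExp ν ∧ P = μ.prod ν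

/-- The entrance time `H_V = inf {t ≥ 0 : Y_t ∈ V}`. -/
def hitT {d N : ℕ} (V : Set (Torus d N)) (ω : CTPath d N) : ℝ :=
  sInf {t | 0 ≤ t ∧ ctPos ω t ∈ V}

/-- The entrance time to `V` after time `s`. -/
def hitTAfter {d N : ℕ} (V : Set (Torus d N)) (ω : CTPath d N) (s : ℝ) : ℝ :=
  sInf {t | s ≤ t ∧ ctPos ω t ∈ V}

/-- The exit time `T_V = inf {t ≥ 0 : Y_t ∉ V}`. -/
def exitT {d N : ℕ} (V : Set (Torus d N)) (ω : CTPath d N) : ℝ :=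
  sInf {t | 0 ≤ t ∧ ctPos ω t ∉ V}

/-- The regeneration time `t_* = (N log N)^2`. -/
def tstar (N : ℕ) : ℝ := ((N : ℝ) * Real.log N) ^ 2

/-- The first time `t ≥ s + t_*` such that the walk has avoided `B` during the
whole interval `[t − t_*, t]`. -/
def uEndAfter {d N : ℕ} (B : Set (Torus d N)) (ω : CTPath d N) (s : ℝ) : ℝ :=
  sInf {t | s + tstar N ≤ t ∧ ∀ r, t - tstar N ≤ r → r ≤ t → ctPos ω r ∉ B}

/-- The successive excursion times `(R_k, U_k)` between `A` and (long absences
from) `B`, with the convention `(R_0, U_0) = (0, 0)`. -/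
def excTimes {d N : ℕ} (A B : Set (Torus d N)) (ω : CTPath d N) : ℕ → ℝ × ℝ
  | 0 => (0, 0)
  | k + 1 =>
      let R := hitTAfter A ω (excTimes A B ω k).2
      (R, uEndAfter B ω R)

/-- The range of the continuous-time walk during the time interval `[a, b]`. -/
def ctRange {d N : ℕ} (ω : CTPath d N) (a b : ℝ) : Set (Torus d N) :=
  {v | ∃ t, a ≤ t ∧ t ≤ b ∧ ctPos ω t = v}

/-! ### The killed walk and the quasistationary distribution -/

/-- The action of the substochastic matrix `P^B` (walk killed on `B`) on a
vector `v`. -/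
def killedMul (d N : ℕ) (B : Set (Torus d N)) (v : Torus d N → ℝ) (x : Torus d N) : ℝ :=
  ∑ᶠ y : Torus d N, if y ∉ B ∧ adj x y then v y / (2 * d) else 0

/-- `l` is an eigenvalue of the killed transition matrix `P^B`. -/
def IsKilledEigenvalue (d N : ℕ) (B : Set (Torus d N)) (l : ℝ) : Prop :=
  ∃ v : Torus d N → ℝ, v ≠ 0 ∧ (∀ x ∈ B, v x = 0) ∧
    ∀ x, x ∉ B → killedMul d N B v x = l * v x

/-- `σ` is the quasistationary distribution on `T ∖ B`: the normalized
non-negative principal (Perron–Frobenius) eigenvector of `P^B`. -/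
def IsQSD (d N : ℕ) (B : Set (Torus d N)) (σ : Torus d N → ℝ) : Prop :=
  (∀ x, 0 ≤ σ x) ∧ (∀ x ∈ B, σ x = 0) ∧ (∑ᶠ x, σ x = 1) ∧
  ∃ l : ℝ, (∀ x, x ∉ B → killedMul d N B σ x = l * σ x) ∧
    ∀ l', IsKilledEigenvalue d N B l' → l' ≤ l

/-- The Dirichlet form of the simple random walk on the torus. -/
def dirichlet (d N : ℕ) (g : Torus d N → ℝ) : ℝ :=
  (1 / 2) * ∑ᶠ x : Torus d N, ∑ᶠ y : Torus d N,
    if adj x y then (g x - g y) ^ 2 / (2 * d * (N : ℝ) ^ d) else 0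

end Frag

namespace Frag

/-!
The number of jumps before entering `V` has mean `h x = ∑ₙ P_x[X₀, …, Xₙ ∉ V]`, and since the
gaps of the clock have mean `1` and are independent of the path, `E_x[H_V] = h x`. Write `Q` for
one step of the lazy walk and `m` for the maximum of `h`.

A step shortens the expected entrance time by at most `1`, so `h ≤ Qⁿ h + n / 2`. Conversely, a
walk from `x` enters `V` within `n` steps only with the probability bounded by `w x + n * a`,
where `w` is a barrier: nonnegative, at least `1` on `V`, and superharmonic up to the error `a`.
Hence `Qⁿ h x ≤ h x + m * (w x + n * a)`. The barrier also bounds `m` from below by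
`1 / (2 * a)`, so the error `n / 2` is at most `n * a * m`. Once `n` exceeds the mixing time,
`Qⁿ h` is nearly the average `E[H_V]` of `h`; then `h ≤ (1 + O(δ)) E[H_V]` everywhere, and
`h ≥ (1 - O(δ)) E[H_V]` wherever `w ≤ δ`.

For `n ≈ N ^ (2 + ε / 16)` the Fourier decomposition of `Q` gives the mixing. In dimension
`d ≥ 3` a small negative power of a regularized squared chordal distance to the origin is
superharmonic up to an error of order `N⁻²`; normalized to be `1` on the boundary of
`B(0, N ^ (1 - ε))`, it is of order `N ^ (-ε / 16)` outside `B(0, N ^ (1 - ε / 2))`.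
-/

/-! ### Expected entrance times of a Markov operator -/

section MarkovOperator

variable {α : Type*} {P : Module.End ℝ (α → ℝ)} {V : Set α}

/-- The Markov property of the one-step averaging operator `P` of a random walk, which acts on
functions by `P f x = E_x[f(X₁)]`. -/
structure IsMarkov (P : Module.End ℝ (α → ℝ)) : Prop where
  monotone : Monotone P
  map_one : P 1 = 1

/-- The operator of the walk that stays put with probability `1/2` at each step. Its powers
converge even if `P` has eigenvalues close to `-1`. -/
def lazy (P : Module.End ℝ (α → ℝ)) : Module.End ℝ (α → ℝ) := (1 / 2 : ℝ) • (1 + P)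

/-- The probability `P_x[H_V > n]` that the walk started at `x` avoids `V` up to time `n`,
computed by the Markov property. -/
def avoidProb (P : Module.End ℝ (α → ℝ)) (V : Set α) : ℕ → α → ℝ
  | 0 => Vᶜ.indicator 1
  | n + 1 => Vᶜ.indicator (P (avoidProb P V n))

/-- The expected entrance time `E_x[H_V] = ∑ₙ P_x[H_V > n]`; a junk value if the series
diverges. -/
def hitMean (P : Module.End ℝ (α → ℝ)) (V : Set α) : α → ℝ := ∑' n, avoidProb P V n

/-- The relative defect `f_V(x) = 1 - E_x[H_V] / E[H_V]`, where `E` is the expectation for the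
walk with uniformly distributed starting point. -/
def hitDefect [Fintype α] (P : Module.End ℝ (α → ℝ)) (V : Set α) (x : α) : ℝ :=
  1 - hitMean P V x / Finset.univ.expect (hitMean P V)

/-- The averaging operator `Q` replaces every nonnegative function by its uniform average, up to a
relative error `δ`. -/
def IsNearlyUniform [Fintype α] (Q : Module.End ℝ (α → ℝ)) (δ : ℝ) : Prop :=
  ∀ f : α → ℝ, 0 ≤ f → ∀ x, |Q f x - Finset.univ.expect f| ≤ δ * Finset.univ.expect f

/-- A barrier for `V`: a nonnegative function that is at least `1` on `V` and superharmonic up to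
the error `a`. If `a` is small, then a walk started where `w` is small is unlikely to enter `V`
within `o(1 / a)` steps. -/
structure IsBarrier (P : Module.End ℝ (α → ℝ)) (V : Set α) (a : ℝ) (w : α → ℝ) : Prop where
  nonneg : 0 ≤ w
  one_le : ∀ x ∈ V, 1 ≤ w x
  apply_le : ∀ x, P w x ≤ w x + a

theorem IsBarrier.mono {W : Set α} {a : ℝ} {w : α → ℝ} (hw : IsBarrier P W a w) (hVW : V ⊆ W) :
    IsBarrier P V a w :=
  ⟨hw.nonneg, fun x hx => hw.one_le x (hVW hx), hw.apply_le⟩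

theorem lazy_apply (f : α → ℝ) (x : α) : lazy P f x = (f x + P f x) / 2 := by
  simp only [lazy, LinearMap.smul_apply, LinearMap.add_apply, Module.End.one_apply,
    Pi.smul_apply, Pi.add_apply, smul_eq_mul]
  ring

namespace IsMarkov

theorem map_const (hP : IsMarkov P) (c : ℝ) : P (fun _ => c) = fun _ => c := by
  have h : (fun _ => c : α → ℝ) = c • 1 := by ext; simp
  rw [h, map_smul, hP.map_one]

theorem lazy (hP : IsMarkov P) : IsMarkov (lazy P) where
  monotone f g h x := by
    rw [lazy_apply, lazy_apply]
    linarith [h x, hP.monotone h x]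
  map_one := by
    ext x
    simp [lazy_apply, hP.map_one]

theorem pow (hP : IsMarkov P) (n : ℕ) : IsMarkov (P ^ n) where
  monotone := by simpa only [Module.End.coe_pow] using hP.monotone.iterate n
  map_one := by simpa only [Module.End.coe_pow] using Function.iterate_fixed hP.map_one n

end IsMarkov

theorem avoidProb_nonneg (hP : Monotone P) (n : ℕ) : 0 ≤ avoidProb P V n := by
  induction n with
  | zero => exact Set.indicator_nonneg fun _ _ => zero_le_one
  | succ n ih =>
    refine Set.indicator_nonneg fun x _ => ?_
    simpa using hP ih x

theorem hitMean_nonneg (hP : Monotone P) : 0 ≤ hitMean P V := tsum_nonneg (avoidProb_nonneg hP)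

theorem sum_avoidProb_le (hP : Monotone P) {g : α → ℝ} (hg : 0 ≤ g)
    (hgV : ∀ x ∉ V, 1 + P g x ≤ g x) (n : ℕ) : ∑ k ∈ Finset.range n, avoidProb P V k ≤ g := by
  induction n with
  | zero => simpa using hg
  | succ n ih =>
    intro x
    rw [Finset.sum_range_succ', Pi.add_apply, Finset.sum_apply]
    by_cases hx : x ∈ V
    · simpa [avoidProb, hx] using hg x
    · have hPx := hP ih x
      rw [map_sum, Finset.sum_apply] at hPx
      simpa [avoidProb, hx, add_comm] using (add_le_add_right hPx 1).trans (hgV x hx)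

theorem summable_avoidProb (hP : Monotone P) {g : α → ℝ} (hg : 0 ≤ g)
    (hgV : ∀ x ∉ V, 1 + P g x ≤ g x) : Summable (avoidProb P V) := by
  refine Pi.summable.2 fun x =>
    summable_of_sum_range_le (c := g x) (fun n => avoidProb_nonneg hP n x) fun n => ?_
  simpa using sum_avoidProb_le hP hg hgV n x

theorem le_smul_avoidProb (hP : Monotone P) {u : α → ℝ} {C : ℝ} (huC : ∀ x, u x ≤ C)
    (huV : ∀ x ∈ V, u x ≤ 0) (hu : ∀ x ∉ V, u x ≤ P u x) (n : ℕ) : u ≤ C • avoidProb P V n := by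
  induction n with
  | zero =>
    intro x
    by_cases hx : x ∈ V
    · simpa [avoidProb, hx] using huV x hx
    · simpa [avoidProb, hx] using huC x
  | succ n ih =>
    intro x
    by_cases hx : x ∈ V
    · simpa [avoidProb, hx] using huV x hx
    · simpa [avoidProb, hx] using (hu x hx).trans (hP ih x)

section Finite

variable [Finite α]

theorem hitMean_eq (hs : Summable (avoidProb P V)) :
    hitMean P V = Vᶜ.indicator (1 + P (hitMean P V)) := by
  have hsucc : HasSum (fun n => avoidProb P V (n + 1)) (Vᶜ.indicator (P (hitMean P V))) := by
    refine Pi.hasSum.2 fun x => ?_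
    by_cases hx : x ∈ V
    · simp [avoidProb, hx]
    · simpa [avoidProb, hx, hitMean] using
        Pi.hasSum.1 (hs.hasSum.map P (LinearMap.continuous_of_finiteDimensional P)) x
  calc hitMean P V = avoidProb P V 0 + ∑' n, avoidProb P V (n + 1) := hs.tsum_eq_zero_add
    _ = Vᶜ.indicator (1 + P (hitMean P V)) := by
      rw [hsucc.tsum_eq, Set.indicator_add', avoidProb]

theorem hitMean_of_mem (hs : Summable (avoidProb P V)) {x : α} (hx : x ∈ V) :
    hitMean P V x = 0 := by
  rw [hitMean_eq hs, Set.indicator_of_notMem (Set.notMem_compl_iff.2 hx)]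

theorem hitMean_of_notMem (hs : Summable (avoidProb P V)) {x : α} (hx : x ∉ V) :
    hitMean P V x = 1 + P (hitMean P V) x := by
  conv_lhs => rw [hitMean_eq hs, Set.indicator_of_mem hx]
  rfl

theorem le_hitMean (hP : Monotone P) (hs : Summable (avoidProb P V)) {v : α → ℝ}
    (hvV : ∀ x ∈ V, v x ≤ 0) (hv : ∀ x ∉ V, v x ≤ 1 + P v x) : v ≤ hitMean P V := by
  intro x
  obtain ⟨C, hC⟩ := (Set.finite_range (v - hitMean P V)).bddAbove
  have hle := le_smul_avoidProb hP (u := v - hitMean P V) (V := V) (C := C)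
    (fun y => hC (Set.mem_range_self y))
    (fun y hy => by simpa [hitMean_of_mem hs hy] using hvV y hy)
    (fun y hy => by
      rw [map_sub, Pi.sub_apply, Pi.sub_apply, hitMean_of_notMem hs hy]
      linarith [hv y hy])
  have hlim : Tendsto (fun n => C * avoidProb P V n x) atTop (nhds (C * 0)) :=
    (Pi.summable.1 hs x).tendsto_atTop_zero.const_mul C
  have := ge_of_tendsto' hlim fun n => hle n x
  simpa using this

theorem IsBarrier.one_sub_div_le_hitMean (hP : IsMarkov P) (hs : Summable (avoidProb P V))
    {a : ℝ} {w : α → ℝ} (hw : IsBarrier P V a w) (ha : 0 < a) (x : α) :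
    (1 - w x) / a ≤ hitMean P V x := by
  refine le_hitMean hP.monotone hs (v := a⁻¹ • (1 - w)) (fun y hy => ?_) (fun y _ => ?_) x
      |>.trans_eq' (by simp [div_eq_inv_mul])
  · exact mul_nonpos_of_nonneg_of_nonpos (inv_nonneg.2 ha.le) (by simpa using hw.one_le y hy)
  · rw [map_smul, map_sub, hP.map_one]
    have hle := mul_le_mul_of_nonneg_left (hw.apply_le y) (inv_nonneg.2 ha.le)
    simp only [Pi.smul_apply, Pi.sub_apply, Pi.one_apply, smul_eq_mul]
    linarith [mul_add a⁻¹ (w y) a, inv_mul_cancel₀ ha.ne']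

theorem hitMean_le_lazy_pow_add (hP : IsMarkov P) (hs : Summable (avoidProb P V)) (n : ℕ)
    (x : α) : hitMean P V x ≤ (lazy P ^ n) (hitMean P V) x + n / 2 := by
  induction n generalizing x with
  | zero => simp
  | succ n ih =>
    have hstep : hitMean P V x ≤ lazy P (hitMean P V) x + 1 / 2 := by
      rw [lazy_apply]
      by_cases hx : x ∈ V
      · have := hP.monotone (hitMean_nonneg (V := V) hP.monotone) x
        rw [map_zero, Pi.zero_apply] at this
        rw [hitMean_of_mem hs hx]
        linarith
      · linarith [hitMean_of_notMem hs hx]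
    have hih : lazy P (hitMean P V) x ≤
        lazy P ((lazy P ^ n) (hitMean P V) + fun _ => (n / 2 : ℝ)) x :=
      hP.lazy.monotone (fun y => ih y) x
    rw [map_add, hP.lazy.map_const, Pi.add_apply, ← Module.End.mul_apply, ← pow_succ'] at hih
    push_cast
    linarith

theorem IsBarrier.lazy_pow_hitMean_le (hP : IsMarkov P) (hs : Summable (avoidProb P V))
    {a m : ℝ} {w : α → ℝ} (hw : IsBarrier P V a w) (ha : 0 ≤ a) (hm : ∀ x, hitMean P V x ≤ m)
    (n : ℕ) (x : α) :
    (lazy P ^ n) (hitMean P V) x ≤ hitMean P V x + m * (w x + n * a) := by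
  have hm0 : 0 ≤ m := (hitMean_nonneg hP.monotone x).trans (hm x)
  induction n generalizing x with
  | zero => simpa using mul_nonneg hm0 (hw.nonneg x)
  | succ n ih =>
    by_cases hx : x ∈ V
    · have hle : (lazy P ^ (n + 1)) (hitMean P V) x ≤ m := by
        simpa only [(hP.lazy.pow _).map_const] using (hP.lazy.pow (n + 1)).monotone hm x
      have hna : 0 ≤ ((n + 1 : ℕ) : ℝ) * a := by positivity
      have hone : m * 1 ≤ m * (w x + (n + 1 : ℕ) * a) :=
        mul_le_mul_of_nonneg_left (by linarith [hw.one_le x hx]) hm0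
      have hnonneg : 0 ≤ hitMean P V x := hitMean_nonneg hP.monotone x
      linarith
    · have hih : lazy P ((lazy P ^ n) (hitMean P V)) x ≤
          lazy P (hitMean P V + m • (w + fun _ => n * a)) x := hP.lazy.monotone (fun y => ih y) x
      rw [map_add, map_smul, map_add, hP.lazy.map_const] at hih
      simp only [Pi.add_apply, Pi.smul_apply, smul_eq_mul, lazy_apply] at hih
      have hstep : (w x + P w x) / 2 + n * a ≤ w x + (n + 1 : ℕ) * a := by
        push_cast
        linarith [hw.apply_le x]
      rw [pow_succ', Module.End.mul_apply, lazy_apply]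
      linarith [mul_le_mul_of_nonneg_left hstep hm0, hitMean_of_notMem hs hx]

end Finite

section Fintype

variable [Fintype α]

theorem abs_hitDefect_le_card (hP : Monotone P) (x : α) :
    |hitDefect P V x| ≤ Fintype.card α := by
  have hnonneg := hitMean_nonneg (V := V) hP
  have : Nonempty α := ⟨x⟩
  have hle : hitMean P V x / Finset.univ.expect (hitMean P V) ≤ Fintype.card α := by
    refine div_le_of_le_mul₀ (Finset.expect_nonneg fun y _ => hnonneg y) (by positivity) ?_
    rw [Fintype.expect_eq_sum_div_card, mul_div_cancel₀ _ (by simp)]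
    exact Finset.single_le_sum (fun y _ => hnonneg y) (Finset.mem_univ x)
  have hquot : 0 ≤ hitMean P V x / Finset.univ.expect (hitMean P V) :=
    div_nonneg (hnonneg x) (Finset.expect_nonneg fun y _ => hnonneg y)
  have hcard : (1 : ℝ) ≤ Fintype.card α := by exact_mod_cast Fintype.card_pos
  exact abs_le.2 ⟨by rw [hitDefect]; linarith, by rw [hitDefect]; linarith⟩

variable [Nonempty α] {a δ : ℝ} {w : α → ℝ} {n : ℕ}

theorem IsBarrier.hitMean_le (hP : IsMarkov P) (hs : Summable (avoidProb P V))
    (hw : IsBarrier P V a w) (ha : 0 < a) (hδ : δ ≤ 1 / 4) (hna : n * a ≤ δ)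
    (hmix : IsNearlyUniform (lazy P ^ n) δ) {x₀ : α} (hx₀ : w x₀ ≤ 1 / 2)
    (x : α) :
    0 < Finset.univ.expect (hitMean P V) ∧
      hitMean P V x ≤ (1 + 3 * δ) * Finset.univ.expect (hitMean P V) := by
  obtain ⟨x₁, hx₁⟩ := Finite.exists_max (hitMean P V)
  have hmixh := hmix _ (hitMean_nonneg (V := V) hP.monotone)
  generalize Finset.univ.expect (hitMean P V) = A at *
  have hδ0 : 0 ≤ δ := le_trans (by positivity) hna
  have hlow : 1 / (2 * a) ≤ hitMean P V x₁ := calc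
    1 / (2 * a) = (1 - 1 / 2) / a := by field_simp; norm_num
    _ ≤ (1 - w x₀) / a := by gcongr
    _ ≤ hitMean P V x₁ := (hw.one_sub_div_le_hitMean hP hs ha x₀).trans (hx₁ x₀)
  have hm : 0 < hitMean P V x₁ := lt_of_lt_of_le (by positivity) hlow
  have hn : (n : ℝ) / 2 ≤ δ * hitMean P V x₁ := calc
    (n : ℝ) / 2 = n * a * (1 / (2 * a)) := by field_simp
    _ ≤ δ * hitMean P V x₁ := by gcongr
  have hupper (y : α) : hitMean P V y ≤ (1 + δ) * A + δ * hitMean P V x₁ := by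
    linarith [hitMean_le_lazy_pow_add hP hs n y, (abs_le.1 (hmixh y)).2]
  have hmA : hitMean P V x₁ ≤ 2 * A := by nlinarith [hupper x₁]
  exact ⟨by linarith, by linarith [mul_le_mul_of_nonneg_left hmA hδ0, hupper x]⟩

theorem IsBarrier.neg_le_hitDefect (hP : IsMarkov P) (hs : Summable (avoidProb P V))
    (hw : IsBarrier P V a w) (ha : 0 < a) (hδ : δ ≤ 1 / 4) (hna : n * a ≤ δ)
    (hmix : IsNearlyUniform (lazy P ^ n) δ) {x₀ : α} (hx₀ : w x₀ ≤ 1 / 2)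
    (x : α) : -(3 * δ) ≤ hitDefect P V x := by
  obtain ⟨hA, hx⟩ := hw.hitMean_le hP hs ha hδ hna hmix hx₀ x
  have := (div_le_iff₀ hA).2 hx
  rw [hitDefect]
  linarith

theorem IsBarrier.abs_hitDefect_le (hP : IsMarkov P) (hs : Summable (avoidProb P V))
    (hw : IsBarrier P V a w) (ha : 0 < a) (hδ : δ ≤ 1 / 4) (hna : n * a ≤ δ)
    (hmix : IsNearlyUniform (lazy P ^ n) δ) {x₀ : α} (hx₀ : w x₀ ≤ 1 / 2)
    {x : α} (hx : w x ≤ δ) : |hitDefect P V x| ≤ 5 * δ := by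
  obtain ⟨x₁, hx₁⟩ := Finite.exists_max (hitMean P V)
  have hlow := hw.neg_le_hitDefect hP hs ha hδ hna hmix hx₀ x
  have hA := (hw.hitMean_le hP hs ha hδ hna hmix hx₀ x₁).1
  have hmA := (hw.hitMean_le hP hs ha hδ hna hmix hx₀ x₁).2
  have hlazy := hw.lazy_pow_hitMean_le hP hs ha.le hx₁ n x
  have hmixx := (abs_le.1 (hmix _ (hitMean_nonneg (V := V) hP.monotone) x)).1
  rw [hitDefect] at hlow ⊢
  generalize Finset.univ.expect (hitMean P V) = A at *
  have hδ0 : 0 ≤ δ := le_trans (by positivity) hna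
  have herr : hitMean P V x₁ * (w x + n * a) ≤ 2 * A * (2 * δ) :=
    mul_le_mul (by nlinarith) (by linarith) (add_nonneg (hw.nonneg x) (by positivity))
      (by linarith)
  have hdiv : 1 - 5 * δ ≤ hitMean P V x / A := (le_div_iff₀ hA).2 (by linarith)
  exact abs_le.2 ⟨by linarith, by linarith⟩

end Fintype

end MarkovOperator

/-! ### Convolution operators on finite abelian groups -/

section CharEigenvalues

variable {G : Type*} [AddCommGroup G] {P : Module.End ℝ (G → ℝ)} {c : AddChar G ℂ → ℝ}

/-- The real parts of the translates of every character `ψ` are eigenfunctions of `P` with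
eigenvalue `c ψ`, as is the case for convolution with a symmetric measure. -/
def HasCharEigenvalues (P : Module.End ℝ (G → ℝ)) (c : AddChar G ℂ → ℝ) : Prop :=
  ∀ (ψ : AddChar G ℂ) (y : G), P (fun x => (ψ (x - y)).re) = c ψ • fun x => (ψ (x - y)).re

theorem abs_re_addChar_le_one [Finite G] (ψ : AddChar G ℂ) (a : G) : |(ψ a).re| ≤ 1 :=
  (Complex.abs_re_le_norm _).trans_eq (ψ.norm_apply a)

theorem sum_re_addChar [Fintype G] (a : G) :
    ∑ ψ : AddChar G ℂ, (ψ a).re = if a = 0 then (Fintype.card G : ℝ) else 0 := by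
  rw [← Complex.re_sum, AddChar.sum_apply_eq_ite]
  split_ifs <;> simp

namespace HasCharEigenvalues

theorem lazy (hP : HasCharEigenvalues P c) :
    HasCharEigenvalues (lazy P) fun ψ => (1 + c ψ) / 2 := fun ψ y => by
  ext x
  rw [lazy_apply, hP, Pi.smul_apply, Pi.smul_apply, smul_eq_mul, smul_eq_mul]
  ring

theorem pow (hP : HasCharEigenvalues P c) (n : ℕ) :
    HasCharEigenvalues (P ^ n) fun ψ => c ψ ^ n := fun ψ y => by
  induction n with
  | zero => simp
  | succ n ih =>
    rw [pow_succ', Module.End.mul_apply, ih, map_smul, hP, smul_smul]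
    simp only [pow_succ]

section Fintype

variable [Fintype G]

theorem apply_eq_expect (hP : HasCharEigenvalues P c) (f : G → ℝ) (x : G) :
    P f x = Finset.univ.expect fun y => f y * ∑ ψ, c ψ * (ψ (x - y)).re := by
  have hf : f = ∑ y, ∑ ψ : AddChar G ℂ,
      (f y / Fintype.card G) • fun x => (ψ (x - y)).re := by
    ext x
    simp only [Finset.sum_apply, Pi.smul_apply, smul_eq_mul, ← Finset.mul_sum, sum_re_addChar,
      sub_eq_zero]
    simp
  conv_lhs => rw [hf]
  simp only [map_sum, map_smul, hP _ _, Finset.sum_apply, Pi.smul_apply, smul_eq_mul,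
    ← Finset.mul_sum, Fintype.expect_eq_sum_div_card, Finset.sum_div]
  exact Finset.sum_congr rfl fun y _ => by ring

theorem isNearlyUniform (hP : HasCharEigenvalues P c) {ρ : ℝ} (hρ : 0 ≤ ρ) (hc₀ : c 0 = 1)
    (hc : ∀ ψ ≠ 0, |c ψ| ≤ ρ) : IsNearlyUniform P (Fintype.card G * ρ) := by
  intro f hf x
  have hkernel (y : G) : |∑ ψ, c ψ * (ψ (x - y)).re - 1| ≤ Fintype.card G * ρ := by
    have hterm (ψ : AddChar G ℂ) (hψ : ψ ∈ ({0} : Finset (AddChar G ℂ))ᶜ) :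
        |c ψ * (ψ (x - y)).re| ≤ ρ := by
      rw [abs_mul]
      exact (mul_le_of_le_one_right (abs_nonneg _) (abs_re_addChar_le_one ψ _)).trans
        (hc ψ (by simpa using hψ))
    rw [Fintype.sum_eq_add_sum_compl 0, hc₀, AddChar.zero_apply, Complex.one_re, mul_one,
      add_sub_cancel_left]
    calc |∑ ψ ∈ ({0} : Finset (AddChar G ℂ))ᶜ, c ψ * (ψ (x - y)).re|
        ≤ ∑ _ψ ∈ ({0} : Finset (AddChar G ℂ))ᶜ, ρ :=
          (Finset.abs_sum_le_sum_abs _ _).trans (Finset.sum_le_sum hterm)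
      _ ≤ Fintype.card G * ρ := by
          rw [Finset.sum_const, nsmul_eq_mul, ← AddChar.card_eq]
          gcongr
          exact Finset.card_le_univ _
  have hdiff : P f x - Finset.univ.expect f =
      Finset.univ.expect fun y => f y * (∑ ψ, c ψ * (ψ (x - y)).re - 1) := by
    rw [hP.apply_eq_expect, ← Finset.expect_sub_distrib]
    simp only [mul_sub, mul_one]
  rw [hdiff, Finset.mul_expect]
  refine (Finset.abs_expect_le _ _).trans (Finset.expect_le_expect fun y _ => ?_)
  rw [abs_mul, abs_of_nonneg (hf y), mul_comm]
  exact mul_le_mul_of_nonneg_right (hkernel y) (hf y)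

theorem isNearlyUniform_lazy_pow (hP : HasCharEigenvalues P c) {γ : ℝ} (hc₀ : c 0 = 1)
    (hc : ∀ ψ, -1 ≤ c ψ) (hγ : ∀ ψ ≠ 0, c ψ ≤ 1 - γ) (n : ℕ) :
    IsNearlyUniform (Frag.lazy P ^ n) (Fintype.card G * Real.exp (-(n * γ / 2))) := by
  refine (hP.lazy.pow n).isNearlyUniform (Real.exp_nonneg _) (by simp [hc₀]) fun ψ hψ => ?_
  have hnonneg : 0 ≤ (1 + c ψ) / 2 := by linarith [hc ψ]
  have hle : (1 + c ψ) / 2 ≤ Real.exp (-(γ / 2)) := by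
    linarith [hγ ψ hψ, Real.add_one_le_exp (-(γ / 2))]
  rw [abs_of_nonneg (pow_nonneg hnonneg n)]
  calc ((1 + c ψ) / 2) ^ n ≤ Real.exp (-(γ / 2)) ^ n := pow_le_pow_left₀ hnonneg hle n
    _ = Real.exp (-(n * γ / 2)) := by rw [← Real.exp_nat_mul]; ring_nf

end Fintype

variable [Finite G]

/-- The supersolution is the expected entrance time of `v`, written as a Fourier series. -/
theorem exists_one_add_apply_le (hP : HasCharEigenvalues P c) (hP₁ : IsMarkov P)
    (hc : ∀ ψ ≠ 0, c ψ < 1) (v : G) :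
    ∃ g : G → ℝ, 0 ≤ g ∧ ∀ x, x ≠ v → 1 + P g x ≤ g x := by
  have := Fintype.ofFinite G
  refine ⟨∑ ψ ∈ ({0} : Finset (AddChar G ℂ))ᶜ,
    (1 - c ψ)⁻¹ • (1 - fun x => (ψ (x - v)).re), ?_, fun x hx => ?_⟩
  · refine Finset.sum_nonneg fun ψ hψ => smul_nonneg ?_ fun x => ?_
    · exact inv_nonneg.2 (sub_nonneg.2 (hc ψ (by simpa using hψ)).le)
    · exact sub_nonneg.2 (abs_le.1 (abs_re_addChar_le_one ψ _)).2
  · have hsum : ∑ ψ ∈ ({0} : Finset (AddChar G ℂ))ᶜ, (ψ (x - v)).re = -1 := by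
      have h := sum_re_addChar (x - v)
      rw [if_neg (sub_ne_zero.2 hx), Fintype.sum_eq_add_sum_compl 0, AddChar.zero_apply,
        Complex.one_re] at h
      linarith
    refine le_of_eq ?_
    rw [map_sum, Finset.sum_apply, Finset.sum_apply, ← sub_eq_zero, add_sub_assoc,
      ← Finset.sum_sub_distrib, add_comm, ← sub_neg_eq_add, sub_eq_zero, ← hsum]
    refine Finset.sum_congr rfl fun ψ hψ => ?_
    have hne : 1 - c ψ ≠ 0 := (sub_pos.2 (hc ψ (by simpa using hψ))).ne'
    rw [map_smul, map_sub, hP₁.map_one, hP]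
    simp only [Pi.smul_apply, Pi.sub_apply, Pi.one_apply, smul_eq_mul]
    field_simp
    ring

theorem summable_avoidProb (hP : HasCharEigenvalues P c) (hP₁ : IsMarkov P)
    (hc : ∀ ψ ≠ 0, c ψ < 1) {V : Set G} (hV : V.Nonempty) : Summable (avoidProb P V) := by
  obtain ⟨v, hv⟩ := hV
  obtain ⟨g, hg₀, hg⟩ := hP.exists_one_add_apply_le hP₁ hc v
  exact Frag.summable_avoidProb hP₁.monotone hg₀ fun x hx => hg x fun h => hx (h ▸ hv)

end HasCharEigenvalues

end CharEigenvalues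

/-! ### Chords of the discrete circle -/

section Chord

variable {N : ℕ} [NeZero N]

/-- Half the squared distance between `exp (2πia/N)` and `1`: a smooth periodic version of the
squared distance of `a` to `0`, rescaled by `N⁻²`. -/
def chordSq (a : ZMod N) : ℝ := 1 - (ZMod.stdAddChar a).re

theorem chordSq_intCast (j : ℤ) :
    chordSq (j : ZMod N) = 1 - Real.cos (2 * Real.pi * j / N) := by
  have h : (2 * (Real.pi : ℂ) * Complex.I * j / N) =
      ((2 * Real.pi * j / N : ℝ) : ℂ) * Complex.I := by push_cast; ring
  rw [chordSq, ← Complex.exp_ofReal_mul_I_re, ← h, ← ZMod.stdAddChar_coe]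

theorem chordSq_eq_one_sub_cos (a : ZMod N) :
    chordSq a = 1 - Real.cos (2 * Real.pi * a.valMinAbs / N) := by
  rw [← chordSq_intCast, ZMod.coe_valMinAbs]

theorem chordSq_intCast_le (j : ℤ) : chordSq (j : ZMod N) ≤ 20 * ((j : ℝ) / N) ^ 2 := by
  have hcos := Real.one_sub_sq_div_two_le_cos (x := 2 * Real.pi * j / N)
  have hpi : Real.pi ^ 2 ≤ 10 := by nlinarith [Real.pi_lt_d2, Real.pi_pos]
  have hsq : (2 * Real.pi * j / N) ^ 2 / 2 = 2 * Real.pi ^ 2 * ((j : ℝ) / N) ^ 2 := by ring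
  rw [chordSq_intCast]
  nlinarith [sq_nonneg ((j : ℝ) / N)]

theorem chordSq_one_le : chordSq (1 : ZMod N) ≤ 20 / (N : ℝ) ^ 2 := by
  simpa [div_eq_mul_inv] using chordSq_intCast_le (N := N) 1

theorem le_chordSq (a : ZMod N) : 8 * ((a.valMinAbs : ℝ) / N) ^ 2 ≤ chordSq a := by
  have hN : (0 : ℝ) < N := by exact_mod_cast Nat.pos_of_neZero N
  have habs : |2 * Real.pi * a.valMinAbs / N| ≤ Real.pi := by
    have h : 2 * |(a.valMinAbs : ℝ)| ≤ N := by
      rw [← Int.cast_abs, ← Nat.cast_natAbs]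
      exact_mod_cast (Nat.mul_le_mul_left 2 a.natAbs_valMinAbs_le).trans (Nat.mul_div_le N 2)
    rw [abs_div, abs_mul, abs_of_pos Real.two_pi_pos, Nat.abs_cast, div_le_iff₀ hN]
    nlinarith [Real.pi_pos]
  have hsq : 2 / Real.pi ^ 2 * (2 * Real.pi * a.valMinAbs / N) ^ 2 =
      8 * ((a.valMinAbs : ℝ) / N) ^ 2 := by
    field_simp
    ring
  rw [chordSq_eq_one_sub_cos]
  linarith [Real.cos_le_one_sub_mul_cos_sq habs]

theorem chordSq_nonneg (a : ZMod N) : 0 ≤ chordSq a := le_trans (by positivity) (le_chordSq a)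

theorem chordSq_le_two (a : ZMod N) : chordSq a ≤ 2 := by
  linarith [chordSq_eq_one_sub_cos a, Real.neg_one_le_cos (2 * Real.pi * a.valMinAbs / N)]

theorem eight_div_sq_le_chordSq {a : ZMod N} (ha : a ≠ 0) : 8 / (N : ℝ) ^ 2 ≤ chordSq a := by
  have h : (1 : ℝ) ≤ (a.valMinAbs : ℝ) ^ 2 := by
    exact_mod_cast (one_le_sq_iff_one_le_abs _).2 (Int.one_le_abs (a.valMinAbs_eq_zero.not.2 ha))
  refine le_trans ?_ (le_chordSq a)
  rw [div_pow, mul_div_assoc']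
  gcongr
  linarith

theorem sq_im_stdAddChar_le (a : ZMod N) : (ZMod.stdAddChar a).im ^ 2 ≤ 2 * chordSq a := by
  have h := Complex.sq_norm (ZMod.stdAddChar a)
  rw [AddChar.norm_apply, Complex.normSq_apply] at h
  rw [chordSq]
  nlinarith [sq_nonneg (1 - (ZMod.stdAddChar a).re)]

theorem chordSq_add (a b : ZMod N) :
    chordSq (a + b) = chordSq a + ((1 - chordSq a) * chordSq b +
      (ZMod.stdAddChar a).im * (ZMod.stdAddChar b).im) := by
  simp only [chordSq, AddChar.map_add_eq_mul, Complex.mul_re]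
  ring

theorem chordSq_sub (a b : ZMod N) :
    chordSq (a - b) = chordSq a + ((1 - chordSq a) * chordSq b -
      (ZMod.stdAddChar a).im * (ZMod.stdAddChar b).im) := by
  simp only [chordSq, sub_eq_add_neg a b, AddChar.map_add_eq_mul, AddChar.map_neg_eq_conj,
    Complex.mul_re, Complex.conj_re, Complex.conj_im]
  ring

theorem re_addChar_le_of_ne_one {G : Type*} [AddMonoid G] {ψ : AddChar G ℂ} {a : G}
    (ha : N • a = 0) (hψ : ψ a ≠ 1) : (ψ a).re ≤ 1 - 8 / (N : ℝ) ^ 2 := by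
  have hpow : ψ a ^ N = 1 := by rw [← AddChar.map_nsmul_eq_pow, ha, AddChar.map_zero_eq_one]
  obtain ⟨k, -, hk⟩ := (Complex.isPrimitiveRoot_exp N (NeZero.ne N)).eq_pow_of_pow_eq_one hpow
  have hk' : ZMod.stdAddChar (k : ZMod N) = ψ a := by
    rw [← hk, ← Complex.exp_nat_mul]
    simpa [mul_div_assoc, mul_comm, mul_left_comm] using ZMod.stdAddChar_coe (N := N) k
  have hne : (k : ZMod N) ≠ 0 := fun h => hψ (by rw [← hk', h, AddChar.map_zero_eq_one])
  have := eight_div_sq_le_chordSq hne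
  rw [chordSq, hk'] at this
  linarith

end Chord

/-! ### The transition operator of the simple random walk -/

section TransitionOperator

variable {d : ℕ} {R : Type*} [AddCommGroupWithOne R]

/-- The `2d` unit vectors `±eᵢ` of `Rᵈ`, the sign being `+` when `p.2 = true`. -/
def signedBasis (p : Fin d × Bool) : Fin d → R := Pi.single p.1 (if p.2 then 1 else -1)

theorem exists_eq_add_signedBasis_of_adj {x y : Fin d → R} (h : adj x y) :
    ∃ p, y = x + signedBasis p := by
  obtain ⟨-, i, hi, hj⟩ := h
  obtain hi | hi := hi
  · refine ⟨(i, true), funext fun j => ?_⟩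
    obtain rfl | hji := eq_or_ne j i
    · simp [signedBasis, hi]
    · simp [signedBasis, hji, hj j hji]
  · refine ⟨(i, false), funext fun j => ?_⟩
    obtain rfl | hji := eq_or_ne j i
    · simp [signedBasis, hi]
    · simp [signedBasis, hji, hj j hji]

theorem adj_add_signedBasis (h₁ : (1 : R) ≠ 0) (x : Fin d → R) (p : Fin d × Bool) :
    adj x (x + signedBasis p) := by
  obtain ⟨i, s⟩ := p
  refine ⟨fun h => ?_, i, ?_, fun j hj => by simp [signedBasis, hj]⟩
  · have := congrFun (left_eq_add.1 h) i
    cases s <;> simp [signedBasis, h₁] at this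
  · cases s <;> simp [signedBasis]

theorem signedBasis_injective (h₂ : (2 : R) ≠ 0) :
    Function.Injective (signedBasis : Fin d × Bool → Fin d → R) := by
  have h₁ : (1 : R) ≠ 0 := fun h => h₂ (by rw [← one_add_one_eq_two, h, add_zero])
  have h_neg : (1 : R) ≠ -1 := fun h => h₂ <| by
    rw [← one_add_one_eq_two, eq_neg_iff_add_eq_zero.1 h]
  rintro ⟨i, s⟩ ⟨j, t⟩ h
  obtain rfl : i = j := by
    by_contra hij
    have := congrFun h i
    cases s <;> simp [signedBasis, hij, h₁] at this
  have := Pi.single_injective i h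
  cases s <;> cases t <;> simp_all [h_neg.symm]

theorem toReal_srwStep (x y : Fin d → R) :
    (srwStep x y).toReal = if adj x y then (2 * d : ℝ)⁻¹ else 0 := by
  rw [srwStep, apply_ite ENNReal.toReal, ENNReal.toReal_zero, ENNReal.toReal_inv,
    ENNReal.toReal_natCast, Nat.cast_mul, Nat.cast_two]

variable [Fintype R]

/-- The transition operator `f ↦ (x ↦ E_x[f (X₁)])` of the simple random walk, as read off from
the transition probabilities `srwStep`. -/
def srwOp : Module.End ℝ ((Fin d → R) → ℝ) :=
  Matrix.mulVecLin (Matrix.of fun x y => (srwStep x y).toReal)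

theorem srwOp_apply (f : (Fin d → R) → ℝ) (x : Fin d → R) :
    srwOp f x = ∑ y, (srwStep x y).toReal * f y := rfl

theorem srwOp_monotone : Monotone (srwOp : Module.End ℝ ((Fin d → R) → ℝ)) := fun f g hfg x => by
  rw [srwOp_apply, srwOp_apply]
  gcongr
  exact hfg _

theorem srwOp_apply_of_two_ne_zero (h₂ : (2 : R) ≠ 0) (f : (Fin d → R) → ℝ) (x : Fin d → R) :
    srwOp f x = (∑ i, (f (x + Pi.single i 1) + f (x - Pi.single i 1))) / (2 * d) := by
  have h₁ : (1 : R) ≠ 0 := fun h => h₂ (by rw [← one_add_one_eq_two, h, add_zero])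
  have hsum : ∑ p, f (x + signedBasis p) / (2 * d) = srwOp f x := by
    rw [srwOp_apply]
    refine Finset.sum_of_injOn (fun p => x + signedBasis p)
      ((add_right_injective x).comp (signedBasis_injective h₂)).injOn (by simp)
      (fun y _ hy => ?_) fun p _ => ?_
    · rw [toReal_srwStep, if_neg, zero_mul]
      intro hadj
      obtain ⟨p, rfl⟩ := exists_eq_add_signedBasis_of_adj hadj
      exact hy ⟨p, by simp, rfl⟩
    · rw [toReal_srwStep, if_pos (adj_add_signedBasis h₁ x p), inv_mul_eq_div]
  rw [← hsum, ← Finset.sum_div, Fintype.sum_prod_type]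
  simp [signedBasis, sub_eq_add_neg, Pi.single_neg]

theorem isMarkov_srwOp (hd : d ≠ 0) (h₂ : (2 : R) ≠ 0) :
    IsMarkov (srwOp : Module.End ℝ ((Fin d → R) → ℝ)) where
  monotone := srwOp_monotone
  map_one := by
    ext x
    simp only [srwOp_apply_of_two_ne_zero h₂, Pi.one_apply, Finset.sum_const, Finset.card_univ,
      Fintype.card_fin, nsmul_eq_mul]
    field_simp
    norm_num

/-- If `2 = 0`, then `x + eᵢ = x - eᵢ`, so `x` has at most `d` neighbours, each reached with
probability `1 / (2d)`. -/
theorem srwOp_one_ne_one (h₂ : (2 : R) = 0) (x : Fin d → R) : srwOp 1 x ≠ 1 := by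
  have h_neg : (-1 : R) = 1 := by rw [neg_eq_iff_add_eq_zero, one_add_one_eq_two, h₂]
  have hsub : Finset.univ.filter (adj x) ⊆ Finset.univ.image fun i => x + Pi.single i 1 := by
    intro y hy
    obtain ⟨⟨i, s⟩, rfl⟩ := exists_eq_add_signedBasis_of_adj (Finset.mem_filter.1 hy).2
    exact Finset.mem_image.2 ⟨i, Finset.mem_univ i, by simp [signedBasis, h_neg]⟩
  have hcard : (Finset.univ.filter (adj x)).card ≤ d :=
    (Finset.card_le_card hsub).trans (Finset.card_image_le.trans_eq (Finset.card_fin d))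
  have hsum : srwOp 1 x = (Finset.univ.filter (adj x)).card * (2 * d : ℝ)⁻¹ := by
    simp only [srwOp_apply, toReal_srwStep, Pi.one_apply, mul_one, ← Finset.sum_filter,
      Finset.sum_const, nsmul_eq_mul]
  have hle : srwOp 1 x ≤ 1 / 2 := by
    rw [hsum, ← div_eq_mul_inv]
    refine div_le_of_le_mul₀ (by positivity) (by norm_num) ?_
    have : ((Finset.univ.filter (adj x)).card : ℝ) ≤ d := by exact_mod_cast hcard
    linarith
  linarith

end TransitionOperator

section Gap

variable {d : ℕ}

/-- The eigenvalue of the simple random walk at the character `ψ`. -/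
def srwEigenvalue {G : Type*} [AddGroupWithOne G] (ψ : AddChar (Fin d → G) ℂ) : ℝ :=
  Finset.univ.expect fun i => (ψ (Pi.single i 1)).re

theorem srwEigenvalue_zero {G : Type*} [AddGroupWithOne G] (hd : d ≠ 0) :
    srwEigenvalue (0 : AddChar (Fin d → G) ℂ) = 1 := by
  have : Nonempty (Fin d) := ⟨⟨0, hd.bot_lt⟩⟩
  simp [srwEigenvalue]

theorem hasCharEigenvalues_srwOp {R : Type*} [AddCommGroupWithOne R] [Fintype R]
    (h₂ : (2 : R) ≠ 0) :
    HasCharEigenvalues (srwOp : Module.End ℝ ((Fin d → R) → ℝ)) srwEigenvalue := fun ψ y => by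
  ext x
  have hpair (a b : Fin d → R) :
      (ψ (a + b)).re + (ψ (a - b)).re = 2 * ((ψ b).re * (ψ a).re) := by
    simp only [sub_eq_add_neg a b, AddChar.map_add_eq_mul, AddChar.map_neg_eq_conj,
      Complex.mul_re, Complex.conj_re, Complex.conj_im]
    ring
  simp only [srwOp_apply_of_two_ne_zero h₂, add_sub_right_comm, sub_right_comm x _ y, hpair,
    ← Finset.mul_sum, ← Finset.sum_mul, srwEigenvalue, Fintype.expect_eq_sum_div_card,
    Fintype.card_fin, Pi.smul_apply, smul_eq_mul]
  ring

theorem abs_srwEigenvalue_le_one {R : Type*} [AddCommGroupWithOne R] [Finite R]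
    (ψ : AddChar (Fin d → R) ℂ) : |srwEigenvalue ψ| ≤ 1 := by
  refine (Finset.abs_expect_le _ _).trans ?_
  obtain hd | hd := isEmpty_or_nonempty (Fin d)
  · simp
  · exact Finset.expect_le Finset.univ_nonempty fun i _ => abs_re_addChar_le_one ψ _

variable {N : ℕ} [NeZero N]

theorem exists_apply_single_ne_one {ψ : AddChar (Torus d N) ℂ} (hψ : ψ ≠ 0) :
    ∃ i, ψ (Pi.single i 1) ≠ 1 := by
  by_contra! h
  have hcoord (i : Fin d) (a : ZMod N) : ψ (Pi.single i a) = 1 := by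
    rw [← ZMod.natCast_zmod_val a, ← nsmul_one, Pi.single_nsmul, AddChar.map_nsmul_eq_pow, h,
      one_pow]
  refine hψ (AddChar.toAddMonoidHomEquiv.injective ?_)
  ext i
  simp [hcoord]

theorem srwEigenvalue_le {ψ : AddChar (Torus d N) ℂ} (hψ : ψ ≠ 0) :
    srwEigenvalue ψ ≤ 1 - 8 / (d * (N : ℝ) ^ 2) := by
  obtain ⟨i, hi⟩ := exists_apply_single_ne_one hψ
  have hone (j : Fin d) : (ψ (Pi.single j 1)).re ≤ 1 := (abs_le.1 (abs_re_addChar_le_one ψ _)).2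
  have hgap : (ψ (Pi.single i 1)).re ≤ 1 - 8 / (N : ℝ) ^ 2 := by
    refine re_addChar_le_of_ne_one ?_ hi
    rw [← Pi.single_nsmul, nsmul_one, ZMod.natCast_self, Pi.single_zero]
  have hsum : ∑ j, (ψ (Pi.single j 1)).re ≤ d - 8 / (N : ℝ) ^ 2 := by
    rw [← Finset.add_sum_erase _ _ (Finset.mem_univ i)]
    have hrest := Finset.sum_le_card_nsmul (Finset.univ.erase i) _ _ fun j _ => hone j
    rw [Finset.card_erase_of_mem (Finset.mem_univ i), Finset.card_fin, nsmul_one,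
      Nat.cast_sub (Nat.one_le_of_lt i.2), Nat.cast_one] at hrest
    linarith
  have hd : (0 : ℝ) < d := by exact_mod_cast i.pos
  rw [srwEigenvalue, Fintype.expect_eq_sum_div_card, Fintype.card_fin, div_le_iff₀ hd]
  refine hsum.trans_eq ?_
  field_simp

theorem isNearlyUniform_lazy_srwOp_pow (hd : d ≠ 0) (h₂ : (2 : ZMod N) ≠ 0) (n : ℕ) :
    IsNearlyUniform (lazy (srwOp : Module.End ℝ (Torus d N → ℝ)) ^ n)
      (N ^ d * Real.exp (-(4 * n / (d * (N : ℝ) ^ 2)))) := by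
  have h := (hasCharEigenvalues_srwOp (d := d) h₂).isNearlyUniform_lazy_pow
    (srwEigenvalue_zero hd) (fun ψ => (abs_le.1 (abs_srwEigenvalue_le_one ψ)).1)
    (fun ψ => srwEigenvalue_le) n
  rw [Fintype.card_pi_const, ZMod.card, Nat.cast_pow] at h
  convert h using 4
  ring

theorem summable_avoidProb_srwOp (hd : d ≠ 0) (h₂ : (2 : ZMod N) ≠ 0) {V : Set (Torus d N)}
    (hV : V.Nonempty) : Summable (avoidProb srwOp V) := by
  refine (hasCharEigenvalues_srwOp h₂).summable_avoidProb (isMarkov_srwOp hd h₂)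
    (fun ψ hψ => (srwEigenvalue_le hψ).trans_lt (sub_lt_self 1 ?_)) hV
  have := Nat.pos_of_neZero N
  have := hd.bot_lt
  positivity

end Gap

/-! ### A barrier for balls of the torus -/

section RpowNeg

variable {p : ℝ}

theorem sub_mul_sq_le_log_one_add {t : ℝ} (ht : |t| ≤ 1 / 10) :
    t - 11 / 18 * t ^ 2 ≤ Real.log (1 + t) := by
  have hlog := Real.abs_log_sub_add_sum_range_le (x := -t) (by rw [abs_neg]; linarith) 2
  have herr : |t| ^ 3 / (1 - |t|) ≤ 1 / 9 * t ^ 2 := by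
    rw [div_le_iff₀ (by linarith), ← sq_abs t]
    nlinarith [sq_nonneg |t|]
  norm_num [Finset.sum_range_succ] at hlog
  linarith [(abs_le.1 hlog).1]

theorem one_add_rpow_neg_le (hp₀ : 0 ≤ p) (hp : p ≤ 1 / 16) {t : ℝ} (ht : |t| ≤ 1 / 10) :
    (1 + t) ^ (-p) ≤ 1 - p * t + 11 / 16 * p * t ^ 2 := by
  have hlog := sub_mul_sq_le_log_one_add ht
  obtain ⟨ht₁, ht₂⟩ := abs_le.1 ht
  set q := t - 11 / 18 * t ^ 2
  have hqt : |q| ≤ 17 / 16 * |t| := by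
    rw [show q = (1 - 11 / 18 * t) * t by ring, abs_mul]
    gcongr
    exact abs_le.2 ⟨by linarith, by linarith⟩
  have hq₂ : q ^ 2 ≤ 289 / 256 * t ^ 2 := by
    rw [← sq_abs q, ← sq_abs t]
    nlinarith [abs_nonneg q]
  have hpq : |-(p * q)| ≤ 1 := by
    rw [abs_neg, abs_mul, abs_of_nonneg hp₀]
    nlinarith [abs_nonneg q]
  have hexp := (abs_le.1 (Real.abs_exp_sub_one_sub_id_le hpq)).2
  calc (1 + t) ^ (-p) = Real.exp (-(p * Real.log (1 + t))) := by
        rw [Real.rpow_def_of_pos (by linarith)]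
        ring_nf
    _ ≤ Real.exp (-(p * q)) := by gcongr
    _ ≤ 1 - p * q + (p * q) ^ 2 := by linarith
    _ ≤ 1 - p * t + 11 / 16 * p * t ^ 2 := by
        have hsq : p * (p * q ^ 2) ≤ p * (1 / 16 * (289 / 256 * t ^ 2)) := by gcongr
        have hlin : p * q = p * t - 11 / 18 * (p * t ^ 2) := by simp only [q]; ring
        have hpt : 0 ≤ p * t ^ 2 := by positivity
        linarith

theorem rpow_neg_add_le (hp₀ : 0 ≤ p) (hp : p ≤ 1 / 16) {s t : ℝ} (hs : 0 < s)
    (ht : |t| ≤ s / 10) :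
    (s + t) ^ (-p) ≤ s ^ (-p) * (1 - p * (t / s) + 11 / 16 * p * (t / s) ^ 2) := by
  have hts : |t / s| ≤ 1 / 10 := by
    rw [abs_div, abs_of_pos hs, div_le_iff₀ hs]
    linarith
  rw [show s + t = s * (1 + t / s) by field_simp,
    Real.mul_rpow hs.le (by linarith [(abs_le.1 hts).1])]
  gcongr
  exact one_add_rpow_neg_le hp₀ hp hts

theorem rpow_neg_add_add_rpow_neg_sub_le (hp₀ : 0 ≤ p) (hp : p ≤ 1 / 16) {s u v : ℝ} (hs : 0 < s)
    (huv : 2 * (v ^ 2 + u ^ 2) ≤ (s / 10) ^ 2) :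
    (s + (v + u)) ^ (-p) + (s + (v - u)) ^ (-p) ≤
      s ^ (-p) * (2 - 2 * p * (v / s) + 11 / 8 * p * ((v ^ 2 + u ^ 2) / s ^ 2)) := by
  have hadd : |v + u| ≤ s / 10 :=
    abs_le_of_sq_le_sq (by nlinarith [sq_nonneg (v - u)]) (by positivity)
  have hsub : |v - u| ≤ s / 10 :=
    abs_le_of_sq_le_sq (by nlinarith [sq_nonneg (v + u)]) (by positivity)
  refine (add_le_add (rpow_neg_add_le hp₀ hp hs hadd)
    (rpow_neg_add_le hp₀ hp hs hsub)).trans_eq ?_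
  ring

end RpowNeg

section Barrier

variable {d N : ℕ} [NeZero N]

/-- The smooth periodic version of the squared Euclidean distance of `x` to `0`, rescaled by `N⁻²`
and regularized at scale one. The constant `400` makes its relative increment along each edge at
most `1 / 10`. -/
def regChordSq (x : Torus d N) : ℝ := 400 * d * chordSq (1 : ZMod N) + ∑ i, chordSq (x i)

theorem chordSq_le_sum (x : Torus d N) (i : Fin d) : chordSq (x i) ≤ ∑ j, chordSq (x j) :=
  Finset.single_le_sum (f := fun j => chordSq (x j)) (fun _ _ => chordSq_nonneg _)
    (Finset.mem_univ i)

theorem sum_chordSq_le_regChordSq (x : Torus d N) : ∑ i, chordSq (x i) ≤ regChordSq x :=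
  le_add_of_nonneg_left (mul_nonneg (by positivity) (chordSq_nonneg _))

theorem regChordSq_pos (hd : d ≠ 0) (h₁ : (1 : ZMod N) ≠ 0) (x : Torus d N) :
    0 < regChordSq x := by
  have := Nat.pos_of_neZero N
  have := hd.bot_lt
  have : 0 < chordSq (1 : ZMod N) := lt_of_lt_of_le (by positivity) (eight_div_sq_le_chordSq h₁)
  exact add_pos_of_pos_of_nonneg (by positivity) (Finset.sum_nonneg fun i _ => chordSq_nonneg _)

theorem sum_chordSq_add_single (x : Torus d N) (i : Fin d) (a : ZMod N) :
    ∑ j, chordSq ((x + Pi.single i a : Torus d N) j) =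
      ∑ j, chordSq (x j) + (chordSq (x i + a) - chordSq (x i)) := by
  rw [← sub_eq_iff_eq_add', ← Finset.sum_sub_distrib, Finset.sum_eq_single i]
  · simp
  · intro j _ hj
    simp [hj]
  · simp

theorem regChordSq_add_single (x : Torus d N) (i : Fin d) :
    regChordSq (x + Pi.single i 1) = regChordSq x + ((1 - chordSq (x i)) * chordSq (1 : ZMod N) +
      (ZMod.stdAddChar (x i)).im * (ZMod.stdAddChar (1 : ZMod N)).im) := by
  rw [regChordSq, sum_chordSq_add_single, chordSq_add, regChordSq]
  ring

theorem regChordSq_sub_single (x : Torus d N) (i : Fin d) :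
    regChordSq (x - Pi.single i 1) = regChordSq x + ((1 - chordSq (x i)) * chordSq (1 : ZMod N) -
      (ZMod.stdAddChar (x i)).im * (ZMod.stdAddChar (1 : ZMod N)).im) := by
  rw [sub_eq_add_neg, ← Pi.single_neg, regChordSq, sum_chordSq_add_single, ← sub_eq_add_neg,
    chordSq_sub, regChordSq]
  ring

theorem sq_increment_le (a b : ZMod N) :
    ((1 - chordSq a) * chordSq b) ^ 2 + ((ZMod.stdAddChar a).im * (ZMod.stdAddChar b).im) ^ 2 ≤
      chordSq b ^ 2 + 4 * chordSq b * chordSq a := by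
  have ha₀ := chordSq_nonneg a
  have hcos : (1 - chordSq a) ^ 2 ≤ 1 := by nlinarith [chordSq_le_two a]
  have him : (ZMod.stdAddChar a).im ^ 2 * (ZMod.stdAddChar b).im ^ 2 ≤
      (2 * chordSq a) * (2 * chordSq b) := by
    gcongr <;> exact sq_im_stdAddChar_le _
  rw [mul_pow, mul_pow]
  nlinarith [sq_nonneg (chordSq b)]

variable {p : ℝ}

theorem regChordSq_rpow_neg_pair_le (hd : d ≠ 0) (h₁ : (1 : ZMod N) ≠ 0) (hp₀ : 0 ≤ p)
    (hp : p ≤ 1 / 16) (x : Torus d N) (i : Fin d) :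
    regChordSq (x + Pi.single i 1) ^ (-p) + regChordSq (x - Pi.single i 1) ^ (-p) ≤
      regChordSq x ^ (-p) * (2 -
        2 * p * ((1 - chordSq (x i)) * chordSq (1 : ZMod N) / regChordSq x) +
        11 / 8 * p * ((chordSq (1 : ZMod N) ^ 2 + 4 * chordSq (1 : ZMod N) * chordSq (x i)) /
          regChordSq x ^ 2)) := by
  have hs := regChordSq_pos hd h₁ x
  have hsq := sq_increment_le (x i) 1
  have hβ := chordSq_nonneg (1 : ZMod N)
  have hχ := chordSq_nonneg (x i)
  have hd₁ : (1 : ℝ) ≤ d := by exact_mod_cast hd.bot_lt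
  have hle : 400 * chordSq (1 : ZMod N) + chordSq (x i) ≤ regChordSq x :=
    add_le_add (mul_le_mul_of_nonneg_right (by linarith) hβ) (chordSq_le_sum x i)
  rw [regChordSq_add_single, regChordSq_sub_single]
  refine (rpow_neg_add_add_rpow_neg_sub_le hp₀ hp hs ?_).trans ?_
  · have := pow_le_pow_left₀ (by positivity) hle 2
    nlinarith [mul_nonneg hβ hχ, sq_nonneg (chordSq (x i))]
  · gcongr

/-- For `D ≥ 3` the first-order drift outweighs the second-order terms, up to a term that is
positive only for `S > 1 / 4`. -/
theorem drift_add_second_order_le (hp₀ : 0 ≤ p) {D β S s : ℝ} (hD : 3 ≤ D) (hβ : 0 ≤ β)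
    (hs : 0 < s) (hβS : D * β + 4 * S ≤ 4 * s) :
    2 * D - 2 * p * ((D - S) * β / s) + 11 / 8 * p * ((D * β ^ 2 + 4 * β * S) / s ^ 2) ≤
      2 * D + 2 * p * β * ((S - 1 / 4) / s) := by
  have hsecond : (D * β ^ 2 + 4 * β * S) / s ^ 2 ≤ 4 * β / s := by
    rw [div_le_div_iff₀ (by positivity) hs]
    linarith [mul_le_mul_of_nonneg_left hβS (mul_nonneg hβ hs.le)]
  have hdrift : 0 ≤ p * (β * (D - 3) / s) :=
    mul_nonneg hp₀ (div_nonneg (mul_nonneg hβ (by linarith)) hs.le)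
  have hsplit : 2 * p * β * ((S - 1 / 4) / s) + 2 * p * ((D - S) * β / s) -
      11 / 8 * p * (4 * β / s) = 2 * (p * (β * (D - 3) / s)) := by ring
  linarith [mul_le_mul_of_nonneg_left hsecond (by positivity : 0 ≤ 11 / 8 * p)]

theorem sum_regChordSq_rpow_neg_pair_le (hd : 3 ≤ d) (h₁ : (1 : ZMod N) ≠ 0) (hp₀ : 0 ≤ p)
    (hp : p ≤ 1 / 16) (x : Torus d N) :
    ∑ i, (regChordSq (x + Pi.single i 1) ^ (-p) + regChordSq (x - Pi.single i 1) ^ (-p)) ≤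
      regChordSq x ^ (-p) *
        (2 * d + 2 * p * chordSq (1 : ZMod N) * ((∑ i, chordSq (x i) - 1 / 4) / regChordSq x)) := by
  have hs := regChordSq_pos (by omega) h₁ x
  have hβ := chordSq_nonneg (1 : ZMod N)
  have hβS : d * chordSq (1 : ZMod N) + 4 * ∑ i, chordSq (x i) ≤ 4 * regChordSq x := by
    rw [regChordSq]
    nlinarith [mul_nonneg (Nat.cast_nonneg (α := ℝ) d) hβ]
  refine (Finset.sum_le_sum fun i _ =>
    regChordSq_rpow_neg_pair_le (by omega) h₁ hp₀ hp x i).trans ?_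
  simp only [← Finset.mul_sum, Finset.sum_add_distrib, Finset.sum_sub_distrib, ← Finset.sum_div,
    ← Finset.sum_mul, Finset.sum_const, Finset.card_univ, Fintype.card_fin, nsmul_eq_mul, mul_one,
    mul_comm (d : ℝ) 2]
  exact mul_le_mul_of_nonneg_left
    (drift_add_second_order_le hp₀ (by exact_mod_cast hd) hβ hs hβS) (by positivity)

theorem rpow_neg_mul_sub_div_le (hp₀ : 0 ≤ p) (hp : p ≤ 1 / 16) {s S : ℝ} (hs : 0 < s)
    (hSs : S ≤ s) : s ^ (-p) * (2 * p * ((S - 1 / 4) / s)) ≤ 1 := by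
  obtain hS | hS := le_total S (1 / 4)
  · refine (mul_nonpos_of_nonneg_of_nonpos (by positivity) ?_).trans zero_le_one
    exact mul_nonpos_of_nonneg_of_nonpos (by positivity)
      (div_nonpos_of_nonpos_of_nonneg (by linarith) hs.le)
  · have hpow : s ^ (-p) ≤ 4 := by
      calc s ^ (-p) ≤ (1 / 4) ^ (-p) :=
            Real.rpow_le_rpow_of_nonpos (by norm_num) (hS.trans hSs) (by linarith)
        _ ≤ (1 / 4) ^ (-1 : ℝ) :=
            Real.rpow_le_rpow_of_exponent_ge (by norm_num) (by norm_num) (by linarith)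
        _ = 4 := by rw [Real.rpow_neg_one]; norm_num
    have hdiv : (S - 1 / 4) / s ≤ 1 := by
      rw [div_le_one hs]
      linarith
    calc s ^ (-p) * (2 * p * ((S - 1 / 4) / s)) ≤ 4 * (2 * (1 / 16) * 1) := by
          gcongr
      _ ≤ 1 := by norm_num

theorem srwOp_regChordSq_rpow_neg_le (hd : 3 ≤ d) (h₂ : (2 : ZMod N) ≠ 0) (hp₀ : 0 ≤ p)
    (hp : p ≤ 1 / 16) (x : Torus d N) :
    srwOp (fun y => regChordSq y ^ (-p)) x ≤ regChordSq x ^ (-p) + chordSq (1 : ZMod N) := by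
  have h₁ : (1 : ZMod N) ≠ 0 := fun h => h₂ (by rw [← one_add_one_eq_two, h, add_zero])
  have hs := regChordSq_pos (by omega) h₁ x
  have hd₃ : (3 : ℝ) ≤ d := by exact_mod_cast hd
  have hsuper := mul_le_mul_of_nonneg_left
    (rpow_neg_mul_sub_div_le hp₀ hp hs (sum_chordSq_le_regChordSq x)) (chordSq_nonneg (1 : ZMod N))
  rw [srwOp_apply_of_two_ne_zero h₂, div_le_iff₀ (by positivity)]
  refine (sum_regChordSq_rpow_neg_pair_le hd h₁ hp₀ hp x).trans ?_
  nlinarith [chordSq_nonneg (1 : ZMod N)]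

theorem mem_torusBall_zero_iff {x : Torus d N} {r : ℝ} (hr : 0 ≤ r) :
    x ∈ torusBall 0 r ↔ ∀ i, |((x i).valMinAbs : ℝ)| ≤ r := by
  have hcoord (a : ZMod N) : min (0 - a).val (a - 0).val = a.valMinAbs.natAbs := by
    rw [ZMod.valMinAbs_natAbs_eq_min, zero_sub, sub_zero, min_comm, ZMod.neg_val]
    split_ifs with ha <;> simp [ha]
  simp only [torusBall, Set.mem_ofPred_eq, torusDist, Pi.zero_apply, hcoord,
    ← Nat.le_floor_iff hr, Finset.sup_le_iff, Finset.mem_univ, true_imp_iff]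
  simp only [Nat.le_floor_iff hr, Nat.cast_natAbs, Int.cast_abs]

theorem regChordSq_le_of_mem_torusBall {r : ℝ} (hr : 1 ≤ r) {x : Torus d N}
    (hx : x ∈ torusBall 0 r) : regChordSq x ≤ 8020 * d * (r / N) ^ 2 := by
  have hcoord (i : Fin d) : chordSq (x i) ≤ 20 * (r / N) ^ 2 := by
    rw [← ZMod.coe_valMinAbs (x i)]
    refine (chordSq_intCast_le _).trans ?_
    have := (mem_torusBall_zero_iff (by linarith)).1 hx i
    rw [div_pow, div_pow, ← sq_abs ((x i).valMinAbs : ℝ)]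
    gcongr
  have hone : chordSq (1 : ZMod N) ≤ 20 * (r / N) ^ 2 := by
    refine chordSq_one_le.trans ?_
    rw [div_pow, mul_div_assoc']
    gcongr
    nlinarith
  calc regChordSq x ≤ 400 * d * (20 * (r / N) ^ 2) + ∑ _i : Fin d, 20 * (r / N) ^ 2 := by
        rw [regChordSq]
        gcongr
        exact hcoord _
    _ = 8020 * d * (r / N) ^ 2 := by
        rw [Fin.sum_const, nsmul_eq_mul]
        ring

theorem le_regChordSq_of_notMem_torusBall {r : ℝ} (hr : 0 ≤ r) {x : Torus d N}
    (hx : x ∉ torusBall 0 r) : 8 * (r / N) ^ 2 ≤ regChordSq x := by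
  rw [mem_torusBall_zero_iff hr] at hx
  push Not at hx
  obtain ⟨i, hi⟩ := hx
  calc 8 * (r / N) ^ 2 ≤ 8 * ((x i).valMinAbs / N : ℝ) ^ 2 := by
        rw [div_pow, div_pow, ← sq_abs ((x i).valMinAbs : ℝ)]
        gcongr
    _ ≤ chordSq (x i) := le_chordSq _
    _ ≤ regChordSq x := (chordSq_le_sum x i).trans (sum_chordSq_le_regChordSq x)

theorem exists_notMem_torusBall_zero (hd : d ≠ 0) {r : ℝ} (hr : 0 ≤ r) (hrN : r < (N / 2 : ℕ)) :
    ∃ x : Torus d N, x ∉ torusBall 0 r := by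
  refine ⟨fun _ => (N / 2 : ℕ), fun h => ?_⟩
  have := (mem_torusBall_zero_iff hr).1 h ⟨0, hd.bot_lt⟩
  rw [ZMod.valMinAbs_natCast_of_le_half le_rfl, Int.cast_natCast, Nat.abs_cast] at this
  linarith

theorem mul_sq_rpow_inv_sixteen_le {C t : ℝ} (hC : 1 ≤ C) (ht : 0 ≤ t) :
    (C * t ^ 2) ^ (1 / 16 : ℝ) ≤ C * t ^ (1 / 8 : ℝ) := by
  rw [Real.mul_rpow (by linarith) (sq_nonneg t), ← Real.rpow_two, ← Real.rpow_mul ht]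
  norm_num
  gcongr
  exact Real.rpow_le_self_of_one_le hC (by norm_num)

/-- A barrier for the ball `torusBall 0 r`, behaving like `(r / |x|) ^ (1 / 8)`. -/
def ballBarrier (r : ℝ) (x : Torus d N) : ℝ :=
  (8020 * d * (r / N) ^ 2 / regChordSq x) ^ (1 / 16 : ℝ)

theorem isBarrier_ballBarrier (hd : 3 ≤ d) (h₂ : (2 : ZMod N) ≠ 0) {r : ℝ} (hr : 1 ≤ r) :
    IsBarrier (srwOp : Module.End ℝ (Torus d N → ℝ)) (torusBall 0 r)
      (8020 * d * (r / N) ^ (1 / 8 : ℝ) * (20 / (N : ℝ) ^ 2)) (ballBarrier r) := by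
  have h₁ : (1 : ZMod N) ≠ 0 := fun h => h₂ (by rw [← one_add_one_eq_two, h, add_zero])
  have hs := regChordSq_pos (N := N) (d := d) (by omega) h₁
  refine ⟨fun x => ?_, fun x hx => ?_, fun x => ?_⟩
  · have := hs x
    exact Real.rpow_nonneg (by positivity) _
  · refine Real.one_le_rpow ?_ (by norm_num)
    rw [one_le_div (hs x)]
    exact regChordSq_le_of_mem_torusBall hr hx
  · have hA : 0 ≤ 8020 * d * (r / N) ^ 2 := by positivity
    have hC : (1 : ℝ) ≤ 8020 * d := by exact_mod_cast (by omega : 1 ≤ 8020 * d)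
    have heq : ballBarrier r = (8020 * d * (r / N) ^ 2) ^ (1 / 16 : ℝ) •
        fun x : Torus d N => regChordSq x ^ (-(1 / 16) : ℝ) := by
      ext x
      rw [ballBarrier, Pi.smul_apply, smul_eq_mul, Real.rpow_neg (hs x).le,
        Real.div_rpow hA (hs x).le, ← div_eq_mul_inv]
    rw [heq, map_smul, Pi.smul_apply, Pi.smul_apply, smul_eq_mul, smul_eq_mul]
    refine (mul_le_mul_of_nonneg_left (srwOp_regChordSq_rpow_neg_le hd h₂ (by norm_num) le_rfl x)
      (by positivity)).trans ?_
    rw [mul_add]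
    gcongr
    · exact chordSq_nonneg 1
    · exact mul_sq_rpow_inv_sixteen_le hC (by positivity)
    · exact chordSq_one_le

theorem ballBarrier_le_of_notMem_torusBall (hd : d ≠ 0) {r R : ℝ} (hr : 0 ≤ r) (hR : 0 < R)
    {x : Torus d N} (hx : x ∉ torusBall 0 R) :
    ballBarrier r x ≤ 8020 * d * (r / R) ^ (1 / 8 : ℝ) := by
  have hN : (0 : ℝ) < N := by exact_mod_cast Nat.pos_of_neZero N
  have hC : (1 : ℝ) ≤ 8020 * d := by exact_mod_cast (by omega : 1 ≤ 8020 * d)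
  have hs : (R / N) ^ 2 ≤ regChordSq x := by
    linarith [le_regChordSq_of_notMem_torusBall hR.le hx, sq_nonneg (R / N)]
  have hs₀ : 0 < regChordSq x := lt_of_lt_of_le (by positivity) hs
  refine le_trans ?_ (mul_sq_rpow_inv_sixteen_le hC (div_nonneg hr hR.le))
  rw [ballBarrier]
  gcongr
  rw [div_le_iff₀ hs₀]
  calc 8020 * d * (r / N) ^ 2 = 8020 * d * (r / R) ^ 2 * (R / N) ^ 2 := by field_simp
    _ ≤ 8020 * d * (r / R) ^ 2 * regChordSq x := by gcongr

end Barrier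

/-! ### Paths of the random walk -/

section WalkLaw

instance (n : ℕ) : DiscreteMeasurableSpace (ZMod n) := ⟨fun _ => trivial⟩

theorem sum_avoiding_paths_eq {α : Type*} [Fintype α] {P : Module.End ℝ (α → ℝ)}
    {K : α → α → ℝ} (hP : ∀ f x, P f x = ∑ y, K x y * f y) (V : Set α) (ρ : α → ℝ) (n : ℕ) :
    ∑ p : Fin (n + 1) → α with ∀ k, p k ∉ V, ρ (p 0) * ∏ k : Fin n, K (p k.castSucc) (p k.succ) =
      ∑ x, ρ x * avoidProb P V n x := by
  simp only [Finset.sum_filter]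
  induction n generalizing ρ with
  | zero =>
    rw [← (Equiv.funUnique (Fin 1) α).symm.sum_comp]
    refine Finset.sum_congr rfl fun x _ => ?_
    simp [avoidProb, Set.indicator_apply, ite_not]
  | succ n ih =>
    rw [← (Fin.consEquiv fun _ => α).sum_comp, Fintype.sum_prod_type]
    refine Finset.sum_congr rfl fun x _ => ?_
    by_cases hx : x ∈ V
    · simp [Fin.forall_fin_succ, Fin.consEquiv, avoidProb, hx]
    · rw [avoidProb, Set.indicator_of_mem (by exact hx), hP, ← ih, Finset.mul_sum]
      refine Finset.sum_congr rfl fun p _ => ?_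
      simp [Fin.forall_fin_succ, Fin.consEquiv, Fin.prod_univ_succ, hx]

theorem measurableSet_avoid {α : Type*} [Finite α] [MeasurableSpace α]
    [MeasurableSingletonClass α] (V : Set α) (n : ℕ) :
    MeasurableSet {ω : ℕ → α | ∀ k ≤ n, ω k ∉ V} := by
  simp only [Set.ofPred_forall]
  exact MeasurableSet.iInter fun k => MeasurableSet.iInter fun _ =>
    measurable_pi_apply (X := fun _ => α) k (Set.toFinite Vᶜ).measurableSet

variable {d : ℕ} {R : Type*} [AddCommGroupWithOne R] [MeasurableSpace R]
  {μ : Measure (ℕ → Fin d → R)} {init : (Fin d → R) → ℝ≥0∞}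

theorem IsWalkLaw.measureReal_initial_segment_eq (h : IsWalkLaw μ init) {n : ℕ}
    (p : Fin (n + 1) → Fin d → R) :
    μ.real {ω | ∀ k : Fin (n + 1), ω k = p k} =
      (init (p 0)).toReal * ∏ k : Fin n, (srwStep (p k.castSucc) (p k.succ)).toReal := by
  have hw : {ω : ℕ → Fin d → R | ∀ k : Fin (n + 1), ω k = p k} =
      {ω | ∀ k, k ≤ n → ω k = p (Fin.ofNat (n + 1) k)} := by
    ext ω
    refine ⟨fun hω k hk => ?_, fun hω k => ?_⟩
    · simpa [Nat.mod_eq_of_lt (Nat.lt_succ_of_le hk)] using hω (Fin.ofNat (n + 1) k)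
    · simpa only [Fin.ofNat_val_eq_self] using hω k k.is_le
  rw [hw, Measure.real, h.2 n fun k => p (Fin.ofNat (n + 1) k), ENNReal.toReal_mul,
    ENNReal.toReal_prod, Finset.prod_range]
  congr! 3 with k
  rw [← Fin.ofNat_val_eq_self k.castSucc, ← Fin.ofNat_val_eq_self k.succ]
  rfl

variable [MeasurableSingletonClass R]

theorem IsWalkLaw.measureReal_avoid [Fintype R] (h : IsWalkLaw μ init) (V : Set (Fin d → R))
    (n : ℕ) :
    μ.real {ω | ∀ k ≤ n, ω k ∉ V} = ∑ x, (init x).toReal * avoidProb srwOp V n x := by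
  have := h.1
  rw [← sum_avoiding_paths_eq srwOp_apply V fun x => (init x).toReal]
  simp only [← h.measureReal_initial_segment_eq]
  have hsum := sum_measureReal_preimage_singleton (μ := μ)
    (Finset.univ.filter fun p : Fin (n + 1) → Fin d → R => ∀ k, p k ∉ V)
    (f := fun ω k => ω k) (fun p _ => (measurable_pi_lambda _ fun k => measurable_pi_apply _)
      (measurableSet_singleton p))
  have hpre : {ω : ℕ → Fin d → R | ∀ k ≤ n, ω k ∉ V} = (fun ω (k : Fin (n + 1)) => ω k) ⁻¹'
      ↑(Finset.univ.filter fun p : Fin (n + 1) → Fin d → R => ∀ k, p k ∉ V) := by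
    ext ω
    simp [Fin.forall_iff]
  rw [hpre, ← hsum]
  simp only [Set.preimage, Set.mem_singleton_iff, funext_iff]

theorem IsWalkLaw.two_ne_zero [Finite R] {x : Fin d → R} (h : IsWalkLaw μ (pointInit x)) :
    (2 : R) ≠ 0 := by
  have := Fintype.ofFinite R
  intro h₂
  have := h.1
  refine srwOp_one_ne_one h₂ x ?_
  simpa [pointInit, avoidProb, apply_ite ENNReal.toReal] using (h.measureReal_avoid ∅ 1).symm

end WalkLaw

/-! ### The entrance time of the continuous-time walk -/

section ExponentialClock

variable {ν : Measure (ℕ → ℝ)}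

theorem IsIIDExp.ae_pos (h : IsIIDExp ν) : ∀ᵐ g ∂ν, ∀ k, 0 < g k := by
  have := h.1
  refine ae_all_iff.2 fun n => ?_
  have hone : ν {g | ∀ k, k ≤ n → 0 < g k} = 1 := by simpa using h.2 n 0 fun _ => le_rfl
  have hae : ∀ᵐ g ∂ν, ∀ k, k ≤ n → 0 < g k := (prob_compl_eq_zero_iff (by measurability)).2 hone
  exact hae.mono fun g hg => hg n le_rfl

theorem IsIIDExp.measure_lt (h : IsIIDExp ν) (n : ℕ) {s : ℝ} (hs : 0 ≤ s) :
    ν {g | s < g n} = ENNReal.ofReal (Real.exp (-s)) := by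
  have hsingle := h.2 n (Pi.single n s) fun k => by
    rcases eq_or_ne k n with rfl | hk <;> simp [*]
  rw [Finset.sum_pi_single', if_pos (Finset.self_mem_range_succ n)] at hsingle
  rw [← hsingle]
  refine measure_congr ?_
  filter_upwards [h.ae_pos] with g hg
  refine propext ⟨fun (hgn : s < g n) k _ => ?_, fun hg' => ?_⟩
  · rcases eq_or_ne k n with rfl | hk <;> simp [*]
  · change s < g n
    simpa using hg' n le_rfl

theorem IsIIDExp.lintegral_ofReal (h : IsIIDExp ν) (n : ℕ) :
    ∫⁻ g, ENNReal.ofReal (g n) ∂ν = 1 := by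
  rw [lintegral_eq_lintegral_meas_lt ν (h.ae_pos.mono fun g hg => (hg n).le)
    (measurable_pi_apply n).aemeasurable,
    setLIntegral_congr_fun measurableSet_Ioi fun s hs => h.measure_lt n (le_of_lt hs),
    ← ofReal_integral_eq_lintegral_ofReal (integrableOn_exp_neg_Ioi 0)
      (ae_of_all _ fun s => (Real.exp_pos _).le), integral_exp_neg_Ioi_zero, ENNReal.ofReal_one]

end ExponentialClock

section EntranceTime

variable {d N : ℕ} {V : Set (Torus d N)} {ω : ℕ → Torus d N} {g : ℕ → ℝ}

theorem hitT_nonneg (V : Set (Torus d N)) (ω : CTPath d N) : 0 ≤ hitT V ω :=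
  Real.sInf_nonneg fun _ ht => ht.1

theorem hitT_eq_sum_of_forall_lt_notMem (hg : ∀ k, 0 < g k) {n : ℕ} (hn : ω n ∈ V)
    (hlt : ∀ k < n, ω k ∉ V) : hitT V (ω, g) = ∑ k ∈ Finset.range n, g k := by
  have hmono : StrictMono fun m => ∑ k ∈ Finset.range m, g k :=
    strictMono_nat_of_lt_succ fun m => by
      rw [Finset.sum_range_succ]
      linarith [hg m]
  refine IsLeast.csInf_eq ⟨⟨Finset.sum_nonneg fun k _ => (hg k).le, ?_⟩, ?_⟩
  · have hjumps : nJumps g (∑ k ∈ Finset.range n, g k) = n :=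
      IsGreatest.csSup_eq ⟨le_refl (∑ k ∈ Finset.range n, g k), fun m hm => hmono.le_iff_le.1 hm⟩
    rwa [ctPos, hjumps]
  · rintro t ⟨ht0, htV⟩
    by_contra! ht
    have hbdd : ∀ m ∈ {m | ∑ k ∈ Finset.range m, g k ≤ t}, m < n := fun m hm =>
      hmono.lt_iff_lt.1 (lt_of_le_of_lt hm ht)
    have hmem : nJumps g t ∈ {m | ∑ k ∈ Finset.range m, g k ≤ t} :=
      Nat.sSup_mem ⟨0, by simpa using ht0⟩ ⟨n, fun m hm => (hbdd m hm).le⟩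
    exact hlt _ (hbdd _ hmem) htV

theorem ofReal_hitT_eq_tsum (hg : ∀ k, 0 < g k) (hω : ∃ n, ω n ∈ V) :
    ENNReal.ofReal (hitT V (ω, g)) =
      ∑' n, {ω | ∀ k ≤ n, ω k ∉ V}.indicator 1 ω * ENNReal.ofReal (g n) := by
  have hlt : ∀ k < Nat.find hω, ω k ∉ V := fun k hk => Nat.find_min hω hk
  rw [hitT_eq_sum_of_forall_lt_notMem hg (Nat.find_spec hω) hlt,
    ENNReal.ofReal_sum_of_nonneg fun k _ => (hg k).le,
    tsum_eq_sum (s := Finset.range (Nat.find hω)) fun n hn => ?_]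
  · refine Finset.sum_congr rfl fun n hn => ?_
    rw [Set.indicator_of_mem, Pi.one_apply, one_mul]
    exact fun k hk => hlt k (hk.trans_lt (Finset.mem_range.1 hn))
  · rw [Set.indicator_of_notMem, zero_mul]
    exact fun havoid => havoid _ (by simpa using hn) (Nat.find_spec hω)

variable [NeZero N] {μ : Measure (ℕ → Torus d N)} {init : Torus d N → ℝ≥0∞}

theorem IsWalkLaw.hasSum_measureReal_avoid (h : IsWalkLaw μ init)
    (hs : Summable (avoidProb srwOp V)) :
    HasSum (fun n => μ.real {ω | ∀ k ≤ n, ω k ∉ V})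
      (∑ x, (init x).toReal * hitMean srwOp V x) := by
  simp only [h.measureReal_avoid]
  exact hasSum_sum fun x _ => (Pi.hasSum.1 hs.hasSum x).mul_left _

theorem IsWalkLaw.ae_exists_mem (h : IsWalkLaw μ init) (hs : Summable (avoidProb srwOp V)) :
    ∀ᵐ ω ∂μ, ∃ n, ω n ∈ V := by
  have := h.1
  have hle : μ.real (⋂ n : ℕ, {ω | ∀ k ≤ n, ω k ∉ V}) ≤ 0 :=
    ge_of_tendsto' (h.hasSum_measureReal_avoid hs).summable.tendsto_atTop_zero fun n =>
      measureReal_mono (Set.iInter_subset _ n)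
  refine measure_mono_null (fun ω hω => ?_)
    ((measureReal_eq_zero_iff).1 (le_antisymm hle measureReal_nonneg))
  simp only [Set.mem_compl_iff, Set.mem_ofPred_eq, not_exists] at hω
  exact Set.mem_iInter.2 fun n k _ => hω k

theorem IsCTWalk.integral_hitT {P : Measure (CTPath d N)} (h : IsCTWalk P init)
    (hs : Summable (avoidProb srwOp V)) :
    ∫ ω, hitT V ω ∂P = ∑ x, (init x).toReal * hitMean srwOp V x := by
  obtain ⟨μ, ν, hμ, hν, rfl⟩ := h
  have := hμ.1
  have := hν.1
  let A (n : ℕ) : Set (ℕ → Torus d N) := {ω | ∀ k ≤ n, ω k ∉ V}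
  let F (n : ℕ) (ω : CTPath d N) : ℝ≥0∞ := (A n).indicator 1 ω.1 * ENNReal.ofReal (ω.2 n)
  have hA (n : ℕ) : Measurable ((A n).indicator (1 : (ℕ → Torus d N) → ℝ≥0∞)) :=
    measurable_one.indicator (measurableSet_avoid V n)
  have hclock (n : ℕ) : Measurable fun g : ℕ → ℝ => ENNReal.ofReal (g n) :=
    (measurable_pi_apply n).ennreal_ofReal
  have hF (n : ℕ) : Measurable (F n) :=
    ((hA n).comp measurable_fst).mul ((hclock n).comp measurable_snd)
  have hint (n : ℕ) : ∫⁻ ω, F n ω ∂μ.prod ν = μ (A n) := by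
    rw [lintegral_prod_mul (hA n).aemeasurable (hclock n).aemeasurable, hν.lintegral_ofReal,
      mul_one, lintegral_indicator_one (measurableSet_avoid V n)]
  have hpath : ∀ᵐ ω ∂μ.prod ν, ENNReal.ofReal (hitT V ω) = ∑' n, F n ω := by
    filter_upwards [Measure.quasiMeasurePreserving_fst.ae (hμ.ae_exists_mem hs),
      Measure.quasiMeasurePreserving_snd.ae hν.ae_pos] with ω hω hg
    exact ofReal_hitT_eq_tsum hg hω
  calc ∫ ω, hitT V ω ∂μ.prod ν
    _ = ∫ ω, (∑' n, F n ω).toReal ∂μ.prod ν := integral_congr_ae <| hpath.mono fun ω hω => by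
      simp only [← hω, ENNReal.toReal_ofReal (hitT_nonneg V ω)]
    _ = (∫⁻ ω, ∑' n, F n ω ∂μ.prod ν).toReal :=
      integral_toReal (Measurable.tsum hF).aemeasurable
        (hpath.mono fun ω hω => hω ▸ ENNReal.ofReal_lt_top)
    _ = ∑' n, μ.real (A n) := by
      rw [lintegral_tsum fun n => (hF n).aemeasurable, tsum_congr hint]
      exact ENNReal.tsum_toReal_eq fun n => measure_ne_top _ _
    _ = ∑ x, (init x).toReal * hitMean srwOp V x := (hμ.hasSum_measureReal_avoid hs).tsum_eq

theorem IsCTWalk.one_sub_integral_hitT_div_eq (hs : Summable (avoidProb srwOp V))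
    {x : Torus d N} {Px P : Measure (CTPath d N)} (hPx : IsCTWalk Px (pointInit x))
    (hP : IsCTWalk P (unifInit d N)) :
    1 - (∫ ω, hitT V ω ∂Px) / ∫ ω, hitT V ω ∂P = hitDefect srwOp V x := by
  have hpoint : ∫ ω, hitT V ω ∂Px = hitMean srwOp V x := by
    rw [hPx.integral_hitT hs]
    simp [pointInit, apply_ite ENNReal.toReal]
  have hunif : ∫ ω, hitT V ω ∂P = Finset.univ.expect (hitMean srwOp V) := by
    rw [hP.integral_hitT hs, Fintype.expect_eq_sum_div_card, Finset.sum_div]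
    refine Finset.sum_congr rfl fun y _ => ?_
    simp [unifInit, ZMod.card, div_eq_inv_mul]
  rw [hitDefect, hpoint, hunif]

end EntranceTime

/-! ### Subsets of small balls -/

section SmallBalls

theorem eventually_pow_mul_exp_le {d : ℕ} (hd : d ≠ 0) {η : ℝ} (hη : 0 < η) :
    ∀ᶠ x : ℝ in atTop, x ^ d * Real.exp (-(4 / d * x ^ η)) ≤ x ^ (-η) := by
  have : (0 : ℝ) < d := by positivity
  have hexp := (isLittleO_exp_neg_mul_rpow_atTop (a := 4 / d) (by positivity)
    (-(d + η) / η)).def one_pos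
  filter_upwards [(tendsto_rpow_atTop hη).eventually hexp, eventually_gt_atTop 0] with x hx hx₀
  rw [Real.norm_of_nonneg (Real.exp_pos _).le, Real.norm_of_nonneg (by positivity), one_mul,
    ← Real.rpow_mul hx₀.le, mul_div_cancel₀ _ hη.ne', neg_mul] at hx
  calc x ^ d * Real.exp (-(4 / d * x ^ η)) ≤ x ^ d * x ^ (-(d + η)) := by gcongr
    _ = x ^ (-η) := by
      rw [← Real.rpow_natCast x d, ← Real.rpow_add hx₀]
      ring_nf

theorem exists_pow_le_mul_rpow_neg (N₀ d : ℕ) {η : ℝ} (hη : 0 ≤ η) :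
    ∃ c : ℝ, 0 ≤ c ∧ ∀ N : ℕ, N ≠ 0 → N ≤ N₀ → (N : ℝ) ^ d ≤ c * (N : ℝ) ^ (-η) := by
  refine ⟨(N₀ : ℝ) ^ d * (N₀ : ℝ) ^ η, by positivity, fun N hN hle => ?_⟩
  have hN₀ : (0 : ℝ) < N := by positivity
  rw [Real.rpow_neg hN₀.le, ← div_eq_mul_inv, le_div_iff₀ (by positivity)]
  gcongr

theorem lt_half_of_rpow_neg_le {N : ℕ} (hN : 2 ≤ N) {s : ℝ}
    (hs : (N : ℝ) ^ (-s) ≤ 1 / 8) : (N : ℝ) ^ (1 - s) < (N / 2 : ℕ) := by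
  have hcast : (N : ℝ) ≤ 2 * (N / 2 : ℕ) + 1 := by exact_mod_cast (by omega : N ≤ 2 * (N / 2) + 1)
  have hN' : (2 : ℝ) ≤ N := by exact_mod_cast hN
  rw [sub_eq_add_neg, Real.rpow_add (by positivity), Real.rpow_one]
  nlinarith

theorem natCeil_rpow_mul_le {N : ℝ} (hN : 1 ≤ N) {η C : ℝ} (hη : 0 ≤ η) (hC : 0 ≤ C) :
    ⌈N ^ (2 + η)⌉₊ * (C * (N ^ (1 - 16 * η) / N) ^ (1 / 8 : ℝ) * (20 / N ^ 2)) ≤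
      40 * C * N ^ (-η) := by
  have hN₀ : 0 < N := by linarith
  have hceil : (⌈N ^ (2 + η)⌉₊ : ℝ) ≤ 2 * N ^ (2 + η) := by
    linarith [Nat.ceil_lt_add_one (Real.rpow_nonneg hN₀.le (2 + η)),
      Real.one_le_rpow hN (by linarith : 0 ≤ 2 + η)]
  have hexp : N ^ (2 + η) * ((N ^ (1 - 16 * η) / N) ^ (1 / 8 : ℝ) / N ^ 2) = N ^ (-η) := by
    rw [← Real.rpow_sub_one hN₀.ne', ← Real.rpow_mul hN₀.le, ← Real.rpow_natCast N 2,
      ← Real.rpow_sub hN₀, ← Real.rpow_add hN₀]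
    congr 1
    push_cast
    ring
  calc ⌈N ^ (2 + η)⌉₊ * (C * (N ^ (1 - 16 * η) / N) ^ (1 / 8 : ℝ) * (20 / N ^ 2))
    _ ≤ 2 * N ^ (2 + η) * (C * (N ^ (1 - 16 * η) / N) ^ (1 / 8 : ℝ) * (20 / N ^ 2)) := by gcongr
    _ = 40 * C * (N ^ (2 + η) * ((N ^ (1 - 16 * η) / N) ^ (1 / 8 : ℝ) / N ^ 2)) := by ring
    _ = 40 * C * N ^ (-η) := by rw [hexp]

variable {d N : ℕ} [NeZero N]

theorem hitDefect_bounds_of_subset_torusBall (hd : 3 ≤ d) (h₂ : (2 : ZMod N) ≠ 0) {r R δ : ℝ}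
    (hr : 1 ≤ r) (hR : 0 < R) (hRN : R < (N / 2 : ℕ)) (hδ : δ ≤ 1 / 4)
    (hrR : 8020 * d * (r / R) ^ (1 / 8 : ℝ) ≤ δ) {n : ℕ}
    (hn : n * (8020 * d * (r / N) ^ (1 / 8 : ℝ) * (20 / (N : ℝ) ^ 2)) ≤ δ)
    (hmix : N ^ d * Real.exp (-(4 * n / (d * (N : ℝ) ^ 2))) ≤ δ) {V : Set (Torus d N)}
    (hV : V.Nonempty) (hVr : V ⊆ torusBall 0 r) :
    (∀ x, -(3 * δ) ≤ hitDefect srwOp V x) ∧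
      ∀ x ∉ torusBall (0 : Torus d N) R, |hitDefect srwOp V x| ≤ 5 * δ := by
  have hd₀ : d ≠ 0 := by omega
  have hoff : ∀ x ∉ torusBall (0 : Torus d N) R, ballBarrier r x ≤ δ := fun x hx =>
    (ballBarrier_le_of_notMem_torusBall hd₀ (by linarith) hR hx).trans hrR
  obtain ⟨x₀, hx₀⟩ := exists_notMem_torusBall_zero hd₀ hR.le hRN
  have hx₀_le : ballBarrier r x₀ ≤ 1 / 2 := by linarith [hoff x₀ hx₀]
  have hP : IsMarkov (srwOp : Module.End ℝ (Torus d N → ℝ)) := isMarkov_srwOp hd₀ h₂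
  have hs := summable_avoidProb_srwOp hd₀ h₂ hV
  have hw := (isBarrier_ballBarrier hd h₂ hr).mono hVr
  have ha : 0 < 8020 * d * (r / N) ^ (1 / 8 : ℝ) * (20 / (N : ℝ) ^ 2) := by
    have := Nat.pos_of_neZero N
    positivity
  have hunif : IsNearlyUniform (lazy (srwOp : Module.End ℝ (Torus d N → ℝ)) ^ n) δ :=
    fun f hf x => (isNearlyUniform_lazy_srwOp_pow hd₀ h₂ n f hf x).trans
      (mul_le_mul_of_nonneg_right hmix (Finset.expect_nonneg fun y _ => hf y))
  exact ⟨fun x => hw.neg_le_hitDefect hP hs ha hδ hn hunif hx₀_le x,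
    fun x hx => hw.abs_hitDefect_le hP hs ha hδ hn hunif hx₀_le (hoff x hx)⟩

theorem hitDefect_bounds_of_large (hd : 3 ≤ d) (h₂ : (2 : ZMod N) ≠ 0) {η : ℝ} (hη : 0 < η)
    (hη₁ : 16 * η ≤ 1)
    (hmix : (N : ℝ) ^ d * Real.exp (-(4 / d * (N : ℝ) ^ η)) ≤ (N : ℝ) ^ (-η))
    (hδ : 40 * (8020 * d) * (N : ℝ) ^ (-η) ≤ 1 / 4) {V : Set (Torus d N)} (hV : V.Nonempty)
    (hVr : V ⊆ torusBall 0 ((N : ℝ) ^ (1 - 16 * η))) :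
    (∀ x, -(3 * (40 * (8020 * d) * (N : ℝ) ^ (-η))) ≤ hitDefect srwOp V x) ∧
      ∀ x ∉ torusBall (0 : Torus d N) ((N : ℝ) ^ (1 - 8 * η)),
        |hitDefect srwOp V x| ≤ 5 * (40 * (8020 * d) * (N : ℝ) ^ (-η)) := by
  have hN : (1 : ℝ) ≤ N := by exact_mod_cast Nat.pos_of_neZero N
  have hN₀ : (0 : ℝ) < N := by linarith
  have hd₁ : (1 : ℝ) ≤ d := by exact_mod_cast (by omega : 1 ≤ d)
  have : (1 : ℝ) ≤ 8020 * d := by linarith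
  have hpos : 0 < (N : ℝ) ^ (-η) := by positivity
  have hN₂ : 2 ≤ N := by
    by_contra! h
    obtain rfl : N = 1 := by have := Nat.pos_of_neZero N; omega
    exact h₂ (Subsingleton.elim _ _)
  refine hitDefect_bounds_of_subset_torusBall hd h₂ (Real.one_le_rpow hN (by linarith))
    (by positivity) (lt_half_of_rpow_neg_le hN₂ ?_) hδ ?_ (n := ⌈(N : ℝ) ^ (2 + η)⌉₊)
    (natCeil_rpow_mul_le hN hη.le (by positivity)) ?_ hV hVr
  · calc (N : ℝ) ^ (-(8 * η)) ≤ (N : ℝ) ^ (-η) :=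
          Real.rpow_le_rpow_of_exponent_le hN (by linarith)
      _ ≤ 1 / 8 := by nlinarith
  · rw [← Real.rpow_sub hN₀, ← Real.rpow_mul hN₀.le, show
      (1 - 16 * η - (1 - 8 * η)) * (1 / 8) = -η by ring]
    nlinarith
  · have hceil : 4 / d * (N : ℝ) ^ η ≤ 4 * ⌈(N : ℝ) ^ (2 + η)⌉₊ / (d * (N : ℝ) ^ 2) := calc
      4 / d * (N : ℝ) ^ η = 4 * (N : ℝ) ^ (2 + η) / (d * (N : ℝ) ^ 2) := by
        rw [Real.rpow_add hN₀, Real.rpow_ofNat]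
        field_simp
      _ ≤ 4 * ⌈(N : ℝ) ^ (2 + η)⌉₊ / (d * (N : ℝ) ^ 2) := by
        gcongr
        exact Nat.le_ceil _
    calc (N : ℝ) ^ d * Real.exp (-(4 * ⌈(N : ℝ) ^ (2 + η)⌉₊ / (d * (N : ℝ) ^ 2)))
      _ ≤ (N : ℝ) ^ d * Real.exp (-(4 / d * (N : ℝ) ^ η)) := by gcongr
      _ ≤ 40 * (8020 * d) * (N : ℝ) ^ (-η) := hmix.trans (by nlinarith)

end SmallBalls

theorem exists_hitDefect_bounds {d : ℕ} (hd : 3 ≤ d) {η : ℝ} (hη : 0 < η) (hη₁ : 16 * η ≤ 1) :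
    ∃ c : ℝ, 0 < c ∧ ∀ (N : ℕ) [NeZero N], (2 : ZMod N) ≠ 0 → ∀ V : Set (Torus d N), V.Nonempty →
      V ⊆ torusBall 0 ((N : ℝ) ^ (1 - 16 * η)) →
        (∀ x, -(c * (N : ℝ) ^ (-η)) ≤ hitDefect srwOp V x) ∧
          ∀ x ∉ torusBall (0 : Torus d N) ((N : ℝ) ^ (1 - 8 * η)),
            |hitDefect srwOp V x| ≤ c * (N : ℝ) ^ (-η) := by
  have hδ : ∀ᶠ x : ℝ in atTop, 40 * (8020 * d) * x ^ (-η) ≤ 1 / 4 := by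
    have := (tendsto_rpow_neg_atTop hη).const_mul (40 * (8020 * d) : ℝ)
    rw [mul_zero] at this
    exact this.eventually_le_const (by norm_num)
  obtain ⟨N₀, hN₀⟩ := eventually_atTop.1 (tendsto_natCast_atTop_atTop.eventually
    ((eventually_pow_mul_exp_le (by omega : d ≠ 0) hη).and hδ))
  obtain ⟨c, hc, hsmall⟩ := exists_pow_le_mul_rpow_neg N₀ d hη.le
  refine ⟨5 * (40 * (8020 * d)) + c, by positivity, fun N _ h₂ V hV hVr => ?_⟩
  rw [add_mul]
  have hlarge_nonneg : 0 ≤ 40 * (8020 * d) * (N : ℝ) ^ (-η) := by positivity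
  have hsmall_nonneg : 0 ≤ c * (N : ℝ) ^ (-η) := by positivity
  rcases le_total N₀ N with hN | hN
  · obtain ⟨hmix, hδ⟩ := hN₀ N hN
    obtain ⟨hlow, habs⟩ := hitDefect_bounds_of_large hd h₂ hη hη₁ hmix hδ hV hVr
    exact ⟨fun x => by linarith [hlow x], fun x hx => by linarith [habs x hx]⟩
  · have habs (x : Torus d N) : |hitDefect srwOp V x| ≤ c * (N : ℝ) ^ (-η) := by
      have hcard := abs_hitDefect_le_card (V := V) srwOp_monotone x
      rw [Fintype.card_pi_const, ZMod.card, Nat.cast_pow] at hcard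
      exact hcard.trans (hsmall N (NeZero.ne N) hN)
    exact ⟨fun x => by linarith [(abs_le.1 (habs x)).1], fun x _ => by linarith [habs x]⟩

/-- **Proposition (the starting point barely matters for entrance times).**
For `V ⊆ A = B(0,r_N)` nonempty and `f_V(x) = 1 − E_x[H_V]/E[H_V]`:
`inf_x f_V(x) ≥ −c N^{−c'}` and `sup_{x ∉ B} |f_V(x)| ≤ c N^{−c'}`,
where `B = B(0, N^{1−ε/2})`. -/
theorem entrance_time_ratio_bounds
    (d : ℕ) (hd : 3 ≤ d) (ε : ℝ) (hε : 0 < ε ∧ ε < 1) :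
    ∃ c c' : ℝ, 0 < c ∧ 0 < c' ∧ ∀ N : ℕ, 2 ≤ N →
      ∀ rN : ℝ, 1 ≤ rN → rN ≤ (N : ℝ) ^ (1 - ε) →
        ∀ V : Set (Torus d N), V.Nonempty → V ⊆ torusBall (0 : Torus d N) rN →
          ∀ (Px : Torus d N → Measure (CTPath d N)),
            (∀ x, IsCTWalk (Px x) (pointInit x)) →
            ∀ P : Measure (CTPath d N), IsCTWalk P (unifInit d N) →
              (∀ x : Torus d N,
                -(c * (N : ℝ) ^ (-c')) ≤
                  1 - (∫ ω, hitT V ω ∂(Px x)) / (∫ ω, hitT V ω ∂P)) ∧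
              (∀ x : Torus d N, x ∉ torusBall (0 : Torus d N) ((N : ℝ) ^ (1 - ε / 2)) →
                |1 - (∫ ω, hitT V ω ∂(Px x)) / (∫ ω, hitT V ω ∂P)| ≤
                  c * (N : ℝ) ^ (-c')) := by
  obtain ⟨c, hc, h⟩ := exists_hitDefect_bounds hd (η := ε / 16) (by linarith) (by linarith)
  refine ⟨c, ε / 16, hc, by linarith, fun N hN rN _ hrN V hV hVr Px hPx P hP => ?_⟩
  have : NeZero N := ⟨by omega⟩
  have h₂ : (2 : ZMod N) ≠ 0 := by
    obtain ⟨μ, ν, hμ, -⟩ := hPx 0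
    exact hμ.two_ne_zero
  have hball : V ⊆ torusBall 0 ((N : ℝ) ^ (1 - 16 * (ε / 16))) := fun x hx =>
    (show (torusDist 0 x : ℝ) ≤ rN from hVr hx).trans (by rwa [mul_div_cancel₀ _ (by norm_num)])
  have hs := summable_avoidProb_srwOp (by omega) h₂ hV
  obtain ⟨hlow, habs⟩ := h N h₂ V hV hball
  simp only [fun x => (hPx x).one_sub_integral_hitT_div_eq hs hP]
  rw [show 1 - 8 * (ε / 16) = 1 - ε / 2 by ring] at habs
  exact ⟨hlow, habs⟩

end Frag
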